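/- arXiv:2103.15712 — 2 statements merged into one kernel-verified Lean document; each statement's English description precedes it below -/
import Mathlib

section
/- Let n ≥ 1 be an integer and X a random variable binomially distributed with parameters n and 1/2. Let α ∈ ℝ with α ≥ √n and α + n/α ≤ n/2. Then Pr[X ≥ n/2 + α] ≥ (1/(1.5 · e^(169/6) · √(2π))) · (√n / α) · exp( −2α²/n − 4α³/n² ). -/
open MeasureTheory ProbabilityTheory Real

/-!
By Stirling's formula `C(n, k)` is at least `exp (n H(k/n)) / (e² √n)`, where `H` is the binary
entropy, and the expansion of `H` around `1/2` gives
`2⁻ⁿ C(n, n/2 + x) ≥ exp (-(2x²/n + 16x⁴/(3n³))) / (e² √n)`. The interval `[n/2 + α, n/2 + α + n/α]`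
contains at least `n/(2α)` integers. Throughout it the exponent stays within a constant of its value
at `x = α`, since `n/α` is the scale on which `x²/n` varies by `O(1)`. Summing the point
probabilities over these integers therefore yields a constant times
`(√n/α) exp (-(2α²/n + 16α⁴/(3n³)))`.
-/

theorem log_one_add_le_cubic {x : ℝ} (hx : -1 < x) :
    log (1 + x) ≤ x - x ^ 2 / 2 + x ^ 3 / 3 := by
  set f : ℝ → ℝ := fun t ↦ t - t ^ 2 / 2 + t ^ 3 / 3 - log (1 + t) with hf
  have hderiv (t : ℝ) (ht : -1 < t) : HasDerivAt f (t ^ 3 / (1 + t)) t := by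
    have hne : 1 + t ≠ 0 := by linarith
    have hlog : HasDerivAt (fun s : ℝ ↦ log (1 + s)) (1 / (1 + t)) t :=
      ((hasDerivAt_id t).const_add 1).log hne
    refine (((((hasDerivAt_id t).sub (((hasDerivAt_id t).pow 2).div_const 2)).add
      (((hasDerivAt_id t).pow 3).div_const 3)).sub hlog)).congr_deriv ?_
    simp only [id]
    field_simp
    ring
  have hmin : IsMinOn f (Set.Ioi (-1)) 0 := by
    refine isMinOn_Ioi_of_deriv (hderiv 0 (by norm_num)).continuousAt
      (fun t ht ↦ (hderiv t ht.1).differentiableAt.differentiableWithinAt)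
      (fun t ht ↦ (hderiv t (by linarith [ht.out])).differentiableAt.differentiableWithinAt)
      (fun t ht ↦ ?_) (fun t ht ↦ ?_)
    · rw [(hderiv t ht.1).deriv]
      exact div_nonpos_of_nonpos_of_nonneg (Odd.pow_nonpos (by decide) ht.2.le) (by linarith [ht.1])
    · have ht : 0 < t := ht
      rw [(hderiv t (by linarith)).deriv]
      positivity
  have hf0 : f 0 = 0 := by simp [hf]
  have hfx : f 0 ≤ f x := hmin hx
  rw [hf0] at hfx
  exact sub_nonneg.1 hfx

theorem neg_mul_cubic_le_negMulLog_one_add {x : ℝ} (hx : -1 ≤ x) :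
    -((1 + x) * (x - x ^ 2 / 2 + x ^ 3 / 3)) ≤ negMulLog (1 + x) := by
  rw [negMulLog, neg_mul, neg_le_neg_iff]
  obtain rfl | hx := hx.eq_or_lt
  · simp
  · exact mul_le_mul_of_nonneg_left (log_one_add_le_cubic hx) (by linarith)

theorem add_mul_binEntropy_div_add {a b : ℝ} (h : a + b ≠ 0) :
    (a + b) * binEntropy (a / (a + b)) = negMulLog a + negMulLog b - negMulLog (a + b) := by
  have hb : 1 - a / (a + b) = b / (a + b) := by field_simp; ring
  have hsplit (c : ℝ) : negMulLog c
      = c / (a + b) * negMulLog (a + b) + (a + b) * negMulLog (c / (a + b)) := by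
    rw [← negMulLog_mul, mul_div_cancel₀ _ h]
  rw [binEntropy_eq_negMulLog_add_negMulLog_one_sub, hb, hsplit a, hsplit b]
  field_simp
  ring

theorem log_two_sub_le_binEntropy_two_inv_add {x : ℝ} (hx : |x| ≤ 1 / 2) :
    log 2 - 2 * x ^ 2 - 16 / 3 * x ^ 4 ≤ binEntropy (2⁻¹ + x) := by
  obtain ⟨hlow, hhigh⟩ := abs_le.1 hx
  have hplus := neg_mul_cubic_le_negMulLog_one_add (x := 2 * x) (by linarith)
  have hminus := neg_mul_cubic_le_negMulLog_one_add (x := -(2 * x)) (by linarith)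
  have hsum : 1 + 2 * x + (1 + -(2 * x)) = 2 := by ring
  have hentropy := add_mul_binEntropy_div_add (hsum ▸ two_ne_zero)
  have hmid : (1 + 2 * x) / 2 = 2⁻¹ + x := by ring
  have hlog : negMulLog 2 = -2 * log 2 := rfl
  rw [hsum, hmid, hlog] at hentropy
  linarith

-- For `k = 0` the right-hand side is `1`, because `log 0 = 0`.
theorem log_factorial_le (k : ℕ) :
    log (k.factorial : ℝ) ≤ k * log k - k + log k / 2 + 1 := by
  obtain _ | m := k
  · simp
  have hm : ((m + 1 : ℕ) : ℝ) ≠ 0 := by positivity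
  have hone : log (Stirling.stirlingSeq 1) = 1 - log 2 / 2 := by
    rw [Stirling.stirlingSeq_one, log_div (exp_ne_zero 1) (by positivity), log_exp,
      log_sqrt zero_le_two]
  have hanti : log (Stirling.stirlingSeq (m + 1)) ≤ log (Stirling.stirlingSeq 1) :=
    Stirling.log_stirlingSeq'_antitone (Nat.zero_le m)
  rw [hone, Stirling.log_stirlingSeq_formula, log_mul two_ne_zero hm, log_div hm (exp_ne_zero 1),
    log_exp] at hanti
  linarith

theorem mul_binEntropy_le_log_choose {n k : ℕ} (hn : n ≠ 0) (hk : k ≤ n) :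
    n * binEntropy (k / n) ≤ log (n.choose k) + log n / 2 + 2 := by
  obtain ⟨l, rfl⟩ := Nat.exists_eq_add_of_le hk
  have hentropy : ((k + l : ℕ) : ℝ) * binEntropy (k / (k + l : ℕ))
      = (k + l : ℕ) * log (k + l : ℕ) - k * log k - l * log l := by
    rw [Nat.cast_add, add_mul_binEntropy_div_add (by exact_mod_cast hn)]
    simp only [negMulLog]
    ring
  have hchoose : log ((k + l).choose k) + log k.factorial + log l.factorial
      = log (k + l).factorial := by
    have hpos : ((k + l).choose k : ℝ) ≠ 0 := by exact_mod_cast (Nat.choose_pos hk).ne'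
    rw [← Nat.choose_mul_factorial_mul_factorial hk, Nat.add_sub_cancel_left, Nat.cast_mul,
      Nat.cast_mul, log_mul (mul_ne_zero hpos (by positivity)) (by positivity),
      log_mul hpos (by positivity)]
  have hlog_le {j : ℕ} (hj : j ≤ k + l) : log j ≤ log (k + l : ℕ) := by
    obtain rfl | hj0 := j.eq_zero_or_pos
    · simpa using log_natCast_nonneg (k + l)
    · gcongr
  have hpi : 0 ≤ log (2 * π) := log_nonneg (by linarith [pi_gt_three])
  have hcast : ((k + l : ℕ) : ℝ) = k + l := Nat.cast_add k l
  linarith [Stirling.le_log_factorial_stirling hn, log_factorial_le k, log_factorial_le l,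
    hlog_le (Nat.le_add_right k l), hlog_le (Nat.le_add_left l k)]

/-- An upper bound for the exponential rate `n (log 2 - H(1/2 + x/n))` at which the weight
`2⁻ⁿ C(n, n/2 + x)` decays, `H` being the binary entropy: the leading Gaussian term and a quartic
correction. -/
noncomputable def deviationRate (n x : ℝ) : ℝ :=
  2 * x ^ 2 / n + 16 * x ^ 4 / (3 * n ^ 3)

theorem deviationRate_le_of_le {n x y : ℝ} (hn : 0 ≤ n) (hx : 0 ≤ x) (hxy : x ≤ y) :
    deviationRate n x ≤ deviationRate n y := by
  unfold deviationRate
  gcongr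

theorem deviationRate_le_cubic {n x : ℝ} (hx : 0 ≤ x) (hxn : x ≤ n / 2) :
    deviationRate n x ≤ 2 * x ^ 2 / n + 4 * x ^ 3 / n ^ 2 := by
  obtain rfl | hn := (by linarith : 0 ≤ n).eq_or_lt
  · simp [deviationRate]
  have hquartic : 16 * x ^ 4 / (3 * n ^ 3) ≤ 4 * x ^ 3 / n ^ 2 := by
    rw [div_le_div_iff₀ (by positivity) (by positivity)]
    have : 0 ≤ x ^ 3 * n ^ 2 * (n / 2 - x) := mul_nonneg (by positivity) (by linarith)
    nlinarith [(by positivity : 0 ≤ x ^ 3 * n ^ 3)]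
  unfold deviationRate
  linarith

theorem deviationRate_add_div_le {n x : ℝ} (hn : 0 < n) (hx : √n ≤ x) (hxn : x + n / x ≤ n / 2) :
    deviationRate n (x + n / x) ≤ deviationRate n x + 14 := by
  have hx0 : 0 < x := (sqrt_pos.2 hn).trans_le hx
  set y := x + n / x
  have hxy : x ≤ y := le_add_of_nonneg_right (by positivity)
  have hsq : y ^ 2 - x ^ 2 ≤ 3 * n := by
    have hstep : n / x ≤ x := by
      rw [div_le_iff₀ hx0, ← sq]
      exact (sqrt_le_left hx0.le).1 hx
    have hmul : n / x * x = n := div_mul_cancel₀ n hx0.ne'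
    nlinarith [mul_le_mul_of_nonneg_left hstep (by positivity : 0 ≤ n / x)]
  have hsum : y ^ 2 + x ^ 2 ≤ n ^ 2 / 2 := by nlinarith
  have hdiff : deviationRate n y - deviationRate n x
      = 2 * (y ^ 2 - x ^ 2) / n + 16 * ((y ^ 2 - x ^ 2) * (y ^ 2 + x ^ 2)) / (3 * n ^ 3) := by
    unfold deviationRate
    ring
  have hbound : deviationRate n y - deviationRate n x
      ≤ 2 * (3 * n) / n + 16 * (3 * n * (n ^ 2 / 2)) / (3 * n ^ 3) := by
    rw [hdiff]
    gcongr
  have hconst : 2 * (3 * n) / n + 16 * (3 * n * (n ^ 2 / 2)) / (3 * n ^ 3) = 14 := by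
    field_simp
    norm_num
  linarith

theorem exp_neg_deviationRate_le_choose_div_two_pow {n k : ℕ} (hn : n ≠ 0) (hk : k ≤ n) :
    exp (-deviationRate n (k - n / 2)) / (exp 2 * √n) ≤ n.choose k / 2 ^ n := by
  have hn0 : (0 : ℝ) < n := by positivity
  have hkn : (k : ℝ) ≤ n := by exact_mod_cast hk
  have hchoose : (0 : ℝ) < n.choose k := by exact_mod_cast Nat.choose_pos hk
  set x : ℝ := (k - n / 2) / n with hx
  have hmid : (k : ℝ) / n = 2⁻¹ + x := by rw [hx]; field_simp; ring
  have hx_le : |x| ≤ 1 / 2 := by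
    rw [hx, abs_div, abs_of_pos hn0, div_le_iff₀ hn0, abs_le]
    constructor <;> linarith [k.cast_nonneg (α := ℝ)]
  have hrate : deviationRate n (k - n / 2) = n * (2 * x ^ 2 + 16 / 3 * x ^ 4) := by
    rw [hx, deviationRate]
    field_simp
  have hentropy : n * (log 2 - 2 * x ^ 2 - 16 / 3 * x ^ 4) ≤ log (n.choose k) + log n / 2 + 2 :=
    (mul_le_mul_of_nonneg_left (log_two_sub_le_binEntropy_two_inv_add hx_le) hn0.le).trans
      (hmid ▸ mul_binEntropy_le_log_choose hn hk)
  rw [← log_le_log_iff (by positivity) (by positivity), log_div (exp_ne_zero _) (by positivity),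
    log_mul (exp_ne_zero _) (by positivity), log_div hchoose.ne' (by positivity),
    log_exp, log_exp, log_sqrt hn0.le, log_pow, hrate]
  linarith

theorem half_le_card_Icc_ceil_floor {a w : ℝ} (ha : 0 ≤ a) (hw : 1 ≤ w) :
    w / 2 ≤ (Finset.Icc ⌈a⌉₊ ⌊a + w⌋₊).card := by
  have hcard : ⌈a⌉₊ + ⌊w⌋₊ ≤ ⌊a + w⌋₊ + 1 := by
    rw [← Nat.floor_add_one (by positivity), Nat.le_floor_iff (by positivity), Nat.cast_add]
    linarith [Nat.ceil_lt_add_one ha, Nat.floor_le (zero_le_one.trans hw)]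
  have hfloor : w / 2 ≤ (⌊w⌋₊ : ℝ) := by
    have hone : (1 : ℝ) ≤ ⌊w⌋₊ := by exact_mod_cast Nat.le_floor (by simpa using hw)
    linarith [Nat.lt_floor_add_one w]
  refine hfloor.trans (Nat.cast_le.2 ?_)
  rw [Nat.card_Icc]
  omega

theorem window_le_sum_choose_div_two_pow {n : ℕ} {x w : ℝ} (hx : 0 ≤ x) (hw : 1 ≤ w)
    (hxw : x + w ≤ n / 2) :
    w / 2 * (exp (-deviationRate n (x + w)) / (exp 2 * √n))
      ≤ ∑ j ∈ Finset.Icc ⌈(n : ℝ) / 2 + x⌉₊ n, (n.choose j : ℝ) / 2 ^ n := by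
  have hn0 : n ≠ 0 := by
    rintro rfl
    norm_num at hxw
    linarith
  set window := Finset.Icc ⌈(n : ℝ) / 2 + x⌉₊ ⌊(n : ℝ) / 2 + x + w⌋₊ with hwindow
  have hterm : ∀ j ∈ window,
      exp (-deviationRate n (x + w)) / (exp 2 * √n) ≤ (n.choose j : ℝ) / 2 ^ n := by
    intro j hj
    rw [hwindow, Finset.mem_Icc, Nat.ceil_le, Nat.le_floor_iff (by positivity)] at hj
    have hjn : j ≤ n := by exact_mod_cast (by linarith [hj.2] : (j : ℝ) ≤ n)
    refine le_trans ?_ (exp_neg_deviationRate_le_choose_div_two_pow hn0 hjn)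
    gcongr
    exact deviationRate_le_of_le n.cast_nonneg (by linarith [hj.1]) (by linarith [hj.2])
  calc w / 2 * (exp (-deviationRate n (x + w)) / (exp 2 * √n))
      ≤ window.card * (exp (-deviationRate n (x + w)) / (exp 2 * √n)) := by
        gcongr
        exact half_le_card_Icc_ceil_floor (by positivity) hw
    _ ≤ ∑ j ∈ window, (n.choose j : ℝ) / 2 ^ n := by
        simpa only [nsmul_eq_mul] using Finset.card_nsmul_le_sum window _ _ hterm
    _ ≤ ∑ j ∈ Finset.Icc ⌈(n : ℝ) / 2 + x⌉₊ n, (n.choose j : ℝ) / 2 ^ n := by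
        refine Finset.sum_le_sum_of_subset_of_nonneg (Finset.Icc_subset_Icc_right ?_)
          fun _ _ _ ↦ by positivity
        exact Nat.floor_le_of_le (by linarith)

theorem exp_neg_deviationRate_le_sum_choose_div_two_pow {n : ℕ} (hn : n ≠ 0) {α : ℝ}
    (hα : √n ≤ α) (hαn : α + n / α ≤ n / 2) :
    exp (-16) / 2 * (√n / α) * exp (-deviationRate n α)
      ≤ ∑ j ∈ Finset.Icc ⌈(n : ℝ) / 2 + α⌉₊ n, (n.choose j : ℝ) / 2 ^ n := by
  have hn0 : (0 : ℝ) < n := by positivity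
  have hα0 : 0 < α := (sqrt_pos.2 hn0).trans_le hα
  have hwidth : 1 ≤ n / α := by
    rw [one_le_div hα0]
    linarith [div_pos hn0 hα0]
  have hrate : exp (-14 - deviationRate n α) ≤ exp (-deviationRate n (α + n / α)) :=
    exp_le_exp.2 (by linarith [deviationRate_add_div_le hn0 hα hαn])
  refine le_trans ?_ (window_le_sum_choose_div_two_pow hα0.le hwidth hαn)
  calc exp (-16) / 2 * (√n / α) * exp (-deviationRate n α)
      = n / α / 2 * (exp (-14 - deviationRate n α) / (exp 2 * √n)) := by
        have hexp : exp (-14 - deviationRate n α)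
            = exp (-16) * exp 2 * exp (-deviationRate n α) := by
          rw [← exp_add, ← exp_add]
          ring_nf
        rw [hexp]
        field_simp
        rw [sq_sqrt hn0.le]
    _ ≤ n / α / 2 * (exp (-deviationRate n (α + n / α)) / (exp 2 * √n)) := by gcongr

theorem measure_preimage_finset_of_binomial {Ω : Type*} [MeasurableSpace Ω] {μ : Measure Ω} {n : ℕ}
    {X : Ω → ℕ} (hX : Measurable X)
    (hbin : ∀ j : ℕ, μ {ω | X ω = j} = (n.choose j : ENNReal) / 2 ^ n) (s : Finset ℕ) :
    μ (X ⁻¹' s) = ENNReal.ofReal (∑ j ∈ s, (n.choose j : ℝ) / 2 ^ n) := by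
  rw [← sum_measure_preimage_singleton s fun j _ ↦ hX (measurableSet_singleton j),
    ENNReal.ofReal_sum_of_nonneg fun _ _ ↦ by positivity]
  refine Finset.sum_congr rfl fun j _ ↦ (hbin j).trans ?_
  rw [ENNReal.ofReal_div_of_pos (by positivity), ENNReal.ofReal_natCast,
    ENNReal.ofReal_pow zero_le_two, ENNReal.ofReal_ofNat]

theorem one_div_exp_mul_sqrt_two_pi_le :
    1 / (1.5 * exp (169 / 6) * √(2 * π)) ≤ exp (-16) / 2 := by
  have hsqrt : 2 ≤ √(2 * π) := le_sqrt_of_sq_le (by linarith [pi_gt_three])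
  calc 1 / (1.5 * exp (169 / 6) * √(2 * π)) ≤ 1 / (1 * exp 16 * 2) := by gcongr <;> norm_num
    _ = exp (-16) / 2 := by rw [exp_neg, one_mul]; field_simp

/-- Tail lower bound for the binomial distribution: if `X ~ Bin(n, 1/2)` and `α ≥ √n` with
`α + n/α ≤ n/2`, then
`Pr[X ≥ n/2 + α] ≥ (1/(1.5·e^(169/6)·√(2π)))·(√n/α)·exp(−2α²/n − 4α³/n²)`. -/
theorem binomial_tail_lower {Ω : Type*} [MeasurableSpace Ω] (μ : Measure Ω)
    [IsProbabilityMeasure μ] (n : ℕ) (hn : 1 ≤ n)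
    (X : Ω → ℕ) (hXmeas : Measurable X)
    (hbin : ∀ j : ℕ, μ {ω | X ω = j} = (n.choose j : ENNReal) / 2 ^ n)
    (α : ℝ) (hα1 : Real.sqrt n ≤ α) (hα2 : α + n / α ≤ (n : ℝ) / 2) :
    ENNReal.ofReal
        (1 / (1.5 * Real.exp (169 / 6) * Real.sqrt (2 * Real.pi)) * (Real.sqrt n / α) *
          Real.exp (-2 * α ^ 2 / n - 4 * α ^ 3 / (n : ℝ) ^ 2))
      ≤ μ {ω | (n : ℝ) / 2 + α ≤ (X ω : ℝ)} := by
  have hα0 : 0 ≤ α := (sqrt_nonneg _).trans hα1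
  have hαn : α ≤ n / 2 := (le_add_of_nonneg_right (by positivity)).trans hα2
  have hrate : -2 * α ^ 2 / n - 4 * α ^ 3 / (n : ℝ) ^ 2 ≤ -deviationRate n α := by
    rw [neg_mul, neg_div]
    linarith [deviationRate_le_cubic hα0 hαn]
  calc _ ≤ ENNReal.ofReal (exp (-16) / 2 * (√n / α) * exp (-deviationRate n α)) := by
        gcongr ENNReal.ofReal (?_ * _ * exp ?_)
        exact one_div_exp_mul_sqrt_two_pi_le
    _ ≤ ENNReal.ofReal (∑ j ∈ Finset.Icc ⌈(n : ℝ) / 2 + α⌉₊ n, (n.choose j : ℝ) / 2 ^ n) :=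
        ENNReal.ofReal_le_ofReal <|
          exp_neg_deviationRate_le_sum_choose_div_two_pow (Nat.one_le_iff_ne_zero.1 hn) hα1 hα2
    _ = μ (X ⁻¹' Finset.Icc ⌈(n : ℝ) / 2 + α⌉₊ n) :=
        (measure_preimage_finset_of_binomial hXmeas hbin _).symm
    _ ≤ μ {ω | (n : ℝ) / 2 + α ≤ (X ω : ℝ)} :=
        measure_mono fun ω hω ↦ Nat.ceil_le.1 (Finset.mem_Icc.1 hω).1
end

section
/- Let m, d ∈ ℕ with m, d ≥ 2 and ⌊m/d⌋ ≥ e^6, and let N = m^d. Let P be a jittered sampling point set of N points in [0,1)^d. Then E[D*(P)] ≥ (2e)^(−1/2) · d · m^((d−1)/2) · √( ln(⌊m/d⌋) − ln ln(⌊m/d⌋) ) · ( 1 + √( 2 ln(⌊m/d⌋) / (m − ⌊m/d⌋)^(d−1) ) )^(−1/2) · ( 1 − exp( − √(ln ⌊m/d⌋) / (1.5 · e^(169/6) · √π) ) ). -/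
open MeasureTheory ProbabilityTheory Real

noncomputable section

/-- The axis-aligned cube `∏_i [x_i/m, x_i/m + 1/m)` of the `m`-grid partition of `[0,1)^d`. -/
def jitterCube (m d : ℕ) (x : Fin d → Fin m) : Set (Fin d → ℝ) :=
  Set.univ.pi fun i => Set.Ico ((x i : ℝ) / m) ((x i : ℝ) / m + 1 / m)

/-- The distribution of a jittered sampling point configuration: independently, one point
uniformly distributed in each of the `m^d` cubes. -/
def jitterMeasure (m d : ℕ) : Measure ((Fin d → Fin m) → (Fin d → ℝ)) :=
  Measure.pi fun x => ((m : ENNReal) ^ d) • volume.restrict (jitterCube m d x)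

open scoped Classical in
/-- Signed (non-normalized) discrepancy `|P ∩ A| - N·λ(A)` with `N = m^d` of a point
configuration `P`. -/
def jdisc (m d : ℕ) (P : (Fin d → Fin m) → (Fin d → ℝ)) (A : Set (Fin d → ℝ)) : ℝ :=
  ((Finset.univ.filter fun x => P x ∈ A).card : ℝ) - (m : ℝ) ^ d * (volume A).toReal

/-- The anchored box `[0,y) = ∏_i [0, y_i)`. -/
def anchoredBox (d : ℕ) (y : Fin d → ℝ) : Set (Fin d → ℝ) :=
  Set.univ.pi fun i => Set.Ico 0 (y i)

/-- The (non-normalized) star discrepancy `D*(P) = sup_{y ∈ [0,1)^d} |disc([0,y))|`. -/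
def starDisc (m d : ℕ) (P : (Fin d → Fin m) → (Fin d → ℝ)) : ℝ :=
  ⨆ y : {y : Fin d → ℝ // ∀ i, y i ∈ Set.Ico (0 : ℝ) 1}, |jdisc m d P (anchoredBox d y.1)|

/-- The expected star discrepancy of a jittered sampling point set of `m^d` points. -/
def expStarDisc (m d : ℕ) : ℝ :=
  ∫ P, starDisc m d P ∂(jitterMeasure m d)

/-! Fix `r < m`. For each direction `i` and each height `s ∈ [r, m)`, the cubes at height `s` in
direction `i` whose other coordinates are below `r` form a slab of `n = r ^ (d - 1)` cubes; these
slabs are pairwise disjoint. The number of sample points in the lower halves of the cubes of a slab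
is a fair binomial variable, so with probability `1 - (1 - p) ^ (m - r)` some slab in direction `i`
exceeds its mean `n / 2` by at least `t`, where `p` is the fair binomial tail at `n / 2 + t`.

Choose the upper corner of an anchored box by cutting such a slab in half in every direction where
there is one, and stopping at height `r` in the others. Each slab is then either cut in half, or
contained in the box or disjoint from it, so the slabs contribute at least `t` for every successful
direction. The cubes outside all slabs contribute `0` on average, since the corner depends only on
the points in the slabs. Summing over the directions gives
`d * t * (1 - (1 - p) ^ (m - r)) ≤ expStarDisc m d`.

For the explicit bound, take `r = m - k` with `k = m / d` and `t = √(n * (L - log L) / 2)` with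
`L = log k`. Then `m ^ (d - 1) / e ≤ n`, and `p` is at least a constant times `√L / k`, because
about `√(n / (2 * L))` binomial weights beyond the threshold `t` are all at least a constant times
`exp (-(L - log L)) / √n`. -/

section ProductIndependence

variable {ι : Type*} {E : ι → Type*} [∀ i, MeasurableSpace (E i)]

theorem exists_measurable_eq_comp_restrict_of_dependsOn [∀ i, Nonempty (E i)] {β : Type*}
    [MeasurableSpace β] {f : (∀ i, E i) → β} (hf : Measurable f) {S : Finset ι}
    (hfS : DependsOn f (S : Set ι)) :
    ∃ g : (∀ i : S, E i) → β, Measurable g ∧ f = g ∘ S.restrict := by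
  classical
  let ω₀ : ∀ i, E i := fun i => Classical.arbitrary (E i)
  refine ⟨fun q => f (Function.updateFinset ω₀ S q), hf.comp measurable_updateFinset, ?_⟩
  funext ω
  refine hfS fun i hi => ?_
  simp [Function.updateFinset, Finset.mem_coe.1 hi]

variable [Fintype ι] {μ : ∀ i, Measure (E i)} [∀ i, IsProbabilityMeasure (μ i)]

theorem indepFun_pi_of_dependsOn {β γ : Type*} [MeasurableSpace β] [MeasurableSpace γ]
    {f : (∀ i, E i) → β} {g : (∀ i, E i) → γ} (hf : Measurable f) (hg : Measurable g)
    {S T : Finset ι} (hST : Disjoint S T) (hfS : DependsOn f (S : Set ι))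
    (hgT : DependsOn g (T : Set ι)) : IndepFun f g (Measure.pi μ) := by
  have : ∀ i, Nonempty (E i) := fun i => (μ i).nonempty_of_neZero
  obtain ⟨f', hf', rfl⟩ := exists_measurable_eq_comp_restrict_of_dependsOn hf hfS
  obtain ⟨g', hg', rfl⟩ := exists_measurable_eq_comp_restrict_of_dependsOn hg hgT
  exact ((iIndepFun_pi (X := fun i (e : E i) => e) fun _ => aemeasurable_id).indepFun_finset S T hST
    fun _ => measurable_pi_apply _).comp hf' hg'

theorem measureReal_pi_biInter_of_dependsOn {κ : Type*} {K : Finset κ} {S : κ → Finset ι}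
    (hS : (K : Set κ).PairwiseDisjoint S) {F : κ → Set (∀ i, E i)}
    (hF : ∀ a, MeasurableSet (F a)) (hFS : ∀ a, DependsOn (· ∈ F a) (S a : Set ι)) :
    (Measure.pi μ).real (⋂ a ∈ K, F a) = ∏ a ∈ K, (Measure.pi μ).real (F a) := by
  classical
  induction K using Finset.induction_on with
  | empty => simp
  | insert a K ha ih =>
    rw [Finset.coe_insert, Set.pairwiseDisjoint_insert_of_notMem (by simpa using ha)] at hS
    have hK : MeasurableSet (⋂ b ∈ K, F b) := K.measurableSet_biInter fun b _ => hF b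
    have hKS : DependsOn (· ∈ ⋂ b ∈ K, F b) (K.biUnion S : Set ι) := fun ω ω' h => by
      simp only [Set.mem_iInter]
      refine propext (forall₂_congr fun b hb => Eq.to_iff (hFS b fun i hi => h i ?_))
      exact Finset.mem_biUnion.2 ⟨b, hb, hi⟩
    have hindep : IndepFun (· ∈ F a) (· ∈ ⋂ b ∈ K, F b) (Measure.pi μ) :=
      indepFun_pi_of_dependsOn (measurable_mem.2 (hF a)) (measurable_mem.2 hK)
        ((Finset.disjoint_biUnion_right ..).2 hS.2) (hFS a) hKS
    have hmul := hindep.measure_inter_preimage_eq_mul {True} {True} trivial trivial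
    rw [Finset.prod_insert ha, ← ih hS.1, Finset.set_biInter_insert]
    simpa only [Set.preimage, Set.mem_singleton_iff, eq_iff_iff, iff_true, Set.ofPred_mem_eq,
      measureReal_def, ENNReal.toReal_mul] using congrArg ENNReal.toReal hmul

theorem integral_comp_eq_zero_of_indepFun {Ω α β : Type*} [MeasurableSpace Ω] [MeasurableSpace α]
    [MeasurableSpace β] {μ : Measure Ω} [IsFiniteMeasure μ] {X : Ω → α} {Y : Ω → β}
    (hX : AEMeasurable X μ) (hY : AEMeasurable Y μ) (hXY : IndepFun X Y μ) {g : α → β → ℝ}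
    (hg : Measurable (Function.uncurry g)) (hg_zero : ∀ a, ∫ b, g a b ∂(μ.map Y) = 0) :
    ∫ ω, g (X ω) (Y ω) ∂μ = 0 := by
  have hlaw := hXY.map_prod_eq_prod_map_map hX hY
  change ∫ ω, Function.uncurry g (X ω, Y ω) ∂μ = 0
  rw [← integral_map (hX.prodMk hY) hg.aestronglyMeasurable, hlaw]
  by_cases hint : Integrable (Function.uncurry g) ((μ.map X).prod (μ.map Y))
  · rw [integral_prod _ hint]
    simp [Function.uncurry, hg_zero]
  · exact integral_undef hint

end ProductIndependence

section BinomialCounts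

open scoped unitInterval

theorem hasLaw_ncard_binomial {Ω α : Type*} [MeasurableSpace Ω] {μ : Measure Ω} [Fintype α]
    {X : α → Ω → Prop} (hX : ∀ a, Measurable (X a)) (hind : iIndepFun X μ) {p : I}
    (hp : ∀ a, μ.real {ω | X a ω} = p) :
    HasLaw (fun ω => {a | X a ω}.ncard) Bin(Fintype.card α, p) μ := by
  have := hind.isProbabilityMeasure
  have hlaw : HasLaw (fun ω a => X a ω) (Measure.infinitePi fun a : α =>
      unitInterval.toNNReal p • Measure.dirac (a ∈ (Set.univ : Set α)) +
      unitInterval.toNNReal (unitInterval.symm p) • Measure.dirac False) μ := by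
    refine hind.hasLaw_infinitePi (fun a => ⟨(hX a).aemeasurable, ?_⟩) (by fun_prop)
    refine Measure.ext_of_measureReal_singleton fun P => ?_
    rw [map_measureReal_apply (hX a) (measurableSet_singleton P), measureReal_add_apply]
    by_cases hP : P
    · simp [hP, Set.preimage, hp a, measureReal_def (Measure.dirac _)]
    · have hcompl := probReal_compl_eq_one_sub (μ := μ) (measurableSet_setOfPred.2 (hX a))
      rw [hp a, Set.compl_ofPred] at hcompl
      simpa [hP, Set.preimage, measureReal_def (Measure.dirac _)] using hcompl
  refine ⟨by fun_prop, Measure.ext_of_measureReal_singleton fun k => ?_⟩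
  have hcount : μ.map (fun ω => {a | X a ω}.ncard) =
      setBer((Set.univ : Set α), p).map Set.ncard := by
    rw [setBernoulli_eq_map, ← hlaw.map_eq, Measure.map_map (by fun_prop) (by fun_prop),
      Measure.map_map (by fun_prop) (by fun_prop)]
    rfl
  rw [hcount, map_ncard_setBernoulli_real_singleton Set.finite_univ, binomial_real_singleton,
    Set.ncard_univ, Nat.card_eq_fintype_card]

end BinomialCounts

section FairBinomialTail

theorem sixteen_pow_le_four_mul_centralBinom_sq {h : ℕ} (hh : 1 ≤ h) :
    16 ^ h ≤ 4 * h * h.centralBinom ^ 2 := by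
  induction h, hh using Nat.le_induction with
  | base => simp [Nat.centralBinom_eq_two_mul_choose]
  | succ h hh ih =>
    refine Nat.le_of_mul_le_mul_left ?_ (show 0 < h + 1 by omega)
    calc (h + 1) * 16 ^ (h + 1) = 16 * (h + 1) * 16 ^ h := by ring
      _ ≤ 16 * (h + 1) * (4 * h * h.centralBinom ^ 2) := by gcongr
      _ = 4 * (4 * (4 * h * (h + 1))) * h.centralBinom ^ 2 := by ring
      _ ≤ 4 * (4 * (2 * h + 1) ^ 2) * h.centralBinom ^ 2 := by gcongr; nlinarith
      _ = 4 * ((h + 1) * (h + 1).centralBinom) ^ 2 := by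
        rw [Nat.succ_mul_centralBinom_succ]; ring
      _ = (h + 1) * (4 * (h + 1) * (h + 1).centralBinom ^ 2) := by ring

theorem four_pow_le_two_mul_sqrt_mul_centralBinom {h : ℕ} (hh : 1 ≤ h) :
    (4 : ℝ) ^ h ≤ 2 * √h * h.centralBinom := by
  refine le_of_sq_le_sq ?_ (by positivity)
  calc ((4 : ℝ) ^ h) ^ 2 = 16 ^ h := by rw [pow_right_comm]; norm_num
    _ ≤ 4 * h * (h.centralBinom : ℝ) ^ 2 := mod_cast sixteen_pow_le_four_mul_centralBinom_sq hh
    _ = (2 * √h * h.centralBinom) ^ 2 := by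
      rw [mul_pow, mul_pow, Real.sq_sqrt h.cast_nonneg]; ring

/-- The ratio `(h - a) / (h + a + 1)` is `C(2h, h + a + 1) / C(2h, h + a)`. -/
theorem exp_neg_le_sub_div_add {h a : ℝ} (ha : 0 ≤ a) (hah : a < h) :
    exp (-((2 * a + 1) / (h - a))) ≤ (h - a) / (h + a + 1) := by
  rw [exp_neg, inv_le_comm₀ (exp_pos _) (div_pos (by linarith) (by linarith)), inv_div]
  calc (h + a + 1) / (h - a) = (2 * a + 1) / (h - a) + 1 := by
        rw [div_add_one (by linarith)]; ring
    _ ≤ exp ((2 * a + 1) / (h - a)) := add_one_le_exp _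

theorem centralBinom_mul_exp_le_choose {h a : ℕ} (hah : a < h) :
    h.centralBinom * exp (-((a : ℝ) ^ 2 / (h - a))) ≤ (2 * h).choose (h + a) := by
  induction a with
  | zero => simp [Nat.centralBinom]
  | succ a ih =>
    have hr : (a : ℝ) + 1 < h := mod_cast hah
    have hsucc : ((2 * h).choose (h + (a + 1)) : ℝ) =
        (2 * h).choose (h + a) * ((h - a) / (h + a + 1)) := by
      have := Nat.choose_succ_right_eq (2 * h) (h + a)
      rw [show 2 * h - (h + a) = h - a by omega] at this
      rw [← mul_div_assoc, eq_div_iff (by positivity), ← Nat.cast_sub (by omega : a ≤ h)]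
      exact_mod_cast this
    have hexponent : (a : ℝ) ^ 2 / (h - a) + (2 * a + 1) / (h - a) ≤
        ((a + 1 : ℕ) : ℝ) ^ 2 / (h - (a + 1 : ℕ)) := by
      rw [← add_div]
      push_cast
      exact div_le_div₀ (by positivity) (by linarith) (by linarith) (by linarith)
    calc h.centralBinom * exp (-(((a + 1 : ℕ) : ℝ) ^ 2 / (h - (a + 1 : ℕ))))
        ≤ h.centralBinom * exp (-((a : ℝ) ^ 2 / (h - a)) + -((2 * a + 1) / (h - a))) := by
          gcongr; linarith
      _ = h.centralBinom * exp (-((a : ℝ) ^ 2 / (h - a))) * exp (-((2 * a + 1) / (h - a))) := by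
          rw [exp_add, mul_assoc]
      _ ≤ (2 * h).choose (h + (a + 1)) := by
          rw [hsucc]
          gcongr
          exacts [ih (by omega), exp_neg_le_sub_div_add a.cast_nonneg (by linarith)]

theorem two_mul_choose_two_mul_le {h b : ℕ} (hb : h < b) :
    2 * (2 * h).choose b ≤ (2 * h + 1).choose b := by
  obtain ⟨c, rfl⟩ : ∃ c, b = c + 1 := ⟨b - 1, by omega⟩
  have hanti : (2 * h).choose (c + 1) ≤ (2 * h).choose c := by
    refine Nat.le_of_mul_le_mul_right ?_ (show 0 < c + 1 by omega)
    rw [Nat.choose_succ_right_eq]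
    gcongr
    omega
  rw [Nat.choose_succ_succ']
  omega

theorem choose_two_mul_half_div_two_pow_le {n b : ℕ} (hb : n / 2 < b) :
    ((2 * (n / 2)).choose b : ℝ) / 2 ^ (2 * (n / 2)) ≤ n.choose b / 2 ^ n := by
  rcases Nat.even_or_odd' n with ⟨h, rfl | rfl⟩
  · simp
  · rw [show (2 * h + 1) / 2 = h by omega] at hb ⊢
    rw [div_le_div_iff₀ (by positivity) (by positivity), pow_succ, mul_left_comm, mul_comm]
    gcongr
    rw [mul_comm]
    exact_mod_cast two_mul_choose_two_mul_le hb

theorem exp_neg_div_two_sqrt_le_choose_div_two_pow {n a : ℕ} (ha : 1 ≤ a) (hah : a < n / 2) :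
    exp (-((a : ℝ) ^ 2 / ((n / 2 : ℕ) - a))) / (2 * √(n / 2 : ℕ)) ≤
      n.choose (n / 2 + a) / 2 ^ n := by
  refine le_trans ?_ (choose_two_mul_half_div_two_pow_le (by omega))
  set h := n / 2
  have hsqrt : 0 < √(h : ℝ) := Real.sqrt_pos.2 (by norm_cast; omega)
  rw [div_le_div_iff₀ (by positivity) (by positivity), pow_mul]
  calc exp (-((a : ℝ) ^ 2 / (h - a))) * (2 ^ 2) ^ h
      ≤ exp (-((a : ℝ) ^ 2 / (h - a))) * (2 * √h * h.centralBinom) := by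
        gcongr
        norm_num
        exact four_pow_le_two_mul_sqrt_mul_centralBinom (by omega)
    _ = h.centralBinom * exp (-((a : ℝ) ^ 2 / (h - a))) * (2 * √h) := by ring
    _ ≤ (2 * h).choose (h + a) * (2 * √h) := by
        gcongr
        exact centralBinom_mul_exp_le_choose hah

/-- The probability that `n` fair coin tosses show at least `n / 2 + t` heads. -/
def fairBinomialTail (n : ℕ) (t : ℝ) : ℝ :=
  Bin(n, ⟨1 / 2, by norm_num, by norm_num⟩).real {j | (n : ℝ) / 2 + t ≤ j}

theorem fairBinomialTail_le_one (n : ℕ) (t : ℝ) : fairBinomialTail n t ≤ 1 :=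
  measureReal_le_one

theorem sum_choose_div_two_pow_le_fairBinomialTail {n : ℕ} {t : ℝ} (J : Finset ℕ)
    (hJ : ∀ j ∈ J, (n : ℝ) / 2 + t ≤ j) (hJn : ∀ j ∈ J, j ≤ n) :
    ∑ j ∈ J, (n.choose j : ℝ) / 2 ^ n ≤ fairBinomialTail n t := by
  calc ∑ j ∈ J, (n.choose j : ℝ) / 2 ^ n
      = ∑ j ∈ J, Bin(n, ⟨1 / 2, by norm_num, by norm_num⟩).real {j} := by
        refine Finset.sum_congr rfl fun j hj => ?_
        rw [binomial_real_singleton]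
        norm_num
        rw [mul_assoc, ← pow_add, Nat.add_sub_cancel' (hJn j hj), one_div, inv_pow, div_eq_mul_inv]
    _ ≤ fairBinomialTail n t := by
        rw [sum_measureReal_singleton]
        exact measureReal_mono hJ

theorem mul_exp_neg_div_two_sqrt_le_fairBinomialTail {n a w : ℕ} {t : ℝ} (ha : 1 ≤ a)
    (haw : a + w < n / 2) (ht : (n : ℝ) / 2 + t ≤ (n / 2 : ℕ) + a) :
    w * (exp (-(((a + w : ℕ) : ℝ) ^ 2 / ((n / 2 : ℕ) - (a + w : ℕ)))) / (2 * √(n / 2 : ℕ))) ≤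
      fairBinomialTail n t := by
  have hterm : ∀ j ∈ Finset.Ico (n / 2 + a) (n / 2 + (a + w)),
      exp (-(((a + w : ℕ) : ℝ) ^ 2 / ((n / 2 : ℕ) - (a + w : ℕ)))) / (2 * √(n / 2 : ℕ)) ≤
        n.choose j / 2 ^ n := fun j hj => by
    obtain ⟨b, rfl⟩ := Nat.exists_eq_add_of_le (show n / 2 ≤ j by grind)
    have hb : (b : ℝ) ≤ (a + w : ℕ) := by norm_cast; grind
    have hlt : ((a + w : ℕ) : ℝ) < (n / 2 : ℕ) := by exact_mod_cast haw
    refine le_trans ?_ (exp_neg_div_two_sqrt_le_choose_div_two_pow (a := b) (by grind) (by grind))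
    gcongr
  calc _ = ∑ _j ∈ Finset.Ico (n / 2 + a) (n / 2 + (a + w)),
        exp (-(((a + w : ℕ) : ℝ) ^ 2 / ((n / 2 : ℕ) - (a + w : ℕ)))) / (2 * √(n / 2 : ℕ)) := by
        simp [add_tsub_add_eq_tsub_left]
    _ ≤ ∑ j ∈ Finset.Ico (n / 2 + a) (n / 2 + (a + w)), (n.choose j : ℝ) / 2 ^ n :=
        Finset.sum_le_sum hterm
    _ ≤ fairBinomialTail n t := by
        refine sum_choose_div_two_pow_le_fairBinomialTail _ (fun j hj => ht.trans ?_) (by grind)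
        exact_mod_cast (Finset.mem_Ico.1 hj).1

theorem sq_le_mul_add_seven {h L M a : ℝ} (hL : 6 ≤ L) (hh : L ^ 3 ≤ 4 * h) (hM0 : 0 ≤ M)
    (hM : M ≤ L - 1) (ha0 : 0 ≤ a) (ha : a ≤ √((h + 1 / 2) * M) + √(h / L) + 5 / 2) :
    a ^ 2 ≤ h * (M + 7) := by
  have hL2 : 6 * L ^ 2 ≤ 4 * h := by
    refine le_trans ?_ hh
    rw [pow_succ L 2, mul_comm]
    gcongr
  have hLh : 9 * L ≤ h := by nlinarith
  have hh0 : 0 < h := by linarith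
  set q := √(h / L)
  set r := √(h * M)
  have hq2 : q ^ 2 = h / L := Real.sq_sqrt (by positivity)
  have hr2 : r ^ 2 = h * M := Real.sq_sqrt (by positivity)
  have hrM : √((h + 1 / 2) * M) ≤ r + 3 / 5 * q := by
    rw [Real.sqrt_le_left (by positivity)]
    have hMq : M / 2 ≤ 9 / 25 * q ^ 2 := by
      rw [hq2, ← mul_div_assoc, le_div_iff₀ (by linarith)]
      nlinarith
    calc (h + 1 / 2) * M = r ^ 2 + M / 2 := by rw [hr2]; ring
      _ ≤ r ^ 2 + 9 / 25 * q ^ 2 := by gcongr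
      _ ≤ r ^ 2 + 9 / 25 * q ^ 2 + 6 / 5 * (r * q) := le_add_of_nonneg_right (by positivity)
      _ = (r + 3 / 5 * q) ^ 2 := by ring
  have h52 : 5 / 2 ≤ 17 / 20 * q := by
    refine le_of_sq_le_sq ?_ (by positivity)
    rw [mul_pow, hq2, ← mul_div_assoc, le_div_iff₀ (by linarith)]
    linarith
  have hrq : r * q ≤ h := by
    refine le_of_sq_le_sq ?_ hh0.le
    rw [mul_pow, hr2, hq2, ← mul_div_assoc, div_le_iff₀ (by linarith)]
    nlinarith [mul_pos hh0 hh0]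
  have hq6 : q ^ 2 ≤ h / 6 := by rw [hq2]; gcongr
  calc a ^ 2 ≤ (r + 5 / 2 * q) ^ 2 := by gcongr; linarith
    _ = r ^ 2 + 5 * (r * q) + 25 / 4 * q ^ 2 := by ring
    _ ≤ h * (M + 7) := by linarith

theorem lt_and_sq_div_sub_le {h L M a : ℝ} (hL : 6 ≤ L) (hh : L ^ 3 ≤ 4 * h) (hM0 : 0 ≤ M)
    (hM : M ≤ L - 1) (ha0 : 0 ≤ a) (ha : a ^ 2 ≤ h * (M + 7)) :
    a < h ∧ a ^ 2 / (h - a) ≤ M + 28 := by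
  have hh0 : 0 < h := by nlinarith [pow_pos (show 0 < L by linarith) 3]
  have haM : a * (M + 28) ≤ 21 * h := by
    refine le_of_sq_le_sq ?_ (by positivity)
    calc (a * (M + 28)) ^ 2 = a ^ 2 * (M + 28) ^ 2 := mul_pow ..
      _ ≤ (h * (2 * L)) * (11 / 2 * L) ^ 2 := by
        gcongr
        · exact ha.trans (by gcongr; linarith)
        · linarith
      _ = 121 / 2 * h * L ^ 3 := by ring
      _ ≤ 121 / 2 * h * (4 * h) := by gcongr
      _ ≤ (21 * h) ^ 2 := by nlinarith
  have hah : a < h := by nlinarith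
  refine ⟨hah, ?_⟩
  rw [div_le_iff₀ (by linarith)]
  linarith

theorem pow_three_le_four_mul_half {L : ℝ} {n : ℕ} (hL : 6 ≤ L) (hn : exp L ≤ n) :
    L ^ 3 ≤ 4 * (n / 2 : ℕ) := by
  have hexp : L ^ 3 / 6 + L ^ 4 / 24 + L ^ 5 / 120 ≤ exp L := by
    have := Real.sum_le_exp_of_nonneg (show 0 ≤ L by linarith) 6
    simp only [Finset.sum_range_succ, Finset.range_zero, Finset.sum_empty, Nat.factorial] at this
    norm_num at this
    nlinarith
  have h4 : 6 * L ^ 3 ≤ L ^ 4 := by rw [pow_succ L 3, mul_comm]; gcongr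
  have h5 : 6 * L ^ 4 ≤ L ^ 5 := by rw [pow_succ L 4, mul_comm]; gcongr
  have h3 : (6 : ℝ) ^ 3 ≤ L ^ 3 := by gcongr
  have hn2 : (n : ℝ) ≤ 2 * (n / 2 : ℕ) + 1 := by norm_cast; omega
  linarith

theorem two_mul_exp_twenty_eight_le : 2 * exp 28 ≤ 1.5 * exp (169 / 6) * √π := by
  have hpi : 17 / 10 ≤ √π := Real.le_sqrt_of_sq_le (by linarith [pi_gt_three])
  calc 2 * exp 28 ≤ 1.5 * (17 / 10) * exp 28 := by gcongr; norm_num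
    _ ≤ 1.5 * √π * exp (169 / 6) := by gcongr; norm_num
    _ = 1.5 * exp (169 / 6) * √π := by ring

theorem sqrt_mul_exp_neg_div_le {h L w : ℝ} (hL : 0 < L) (hh : 0 < h) (hw : √(h / L) ≤ w) :
    √L * exp (-L) / (1.5 * exp (169 / 6) * √π) ≤
      w * (exp (-(L - log L + 28)) / (2 * √h)) := by
  have hexp : exp (-(L - log L + 28)) = L * exp (-L) / exp 28 := by
    rw [← exp_log hL, log_exp, ← exp_add, ← exp_sub]
    ring_nf
  calc √L * exp (-L) / (1.5 * exp (169 / 6) * √π) ≤ √L * exp (-L) / (2 * exp 28) := by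
        exact div_le_div_of_nonneg_left (by positivity) (by positivity) two_mul_exp_twenty_eight_le
    _ = √(h / L) * (exp (-(L - log L + 28)) / (2 * √h)) := by
        rw [hexp, Real.sqrt_div hh.le]
        field_simp
        rw [Real.sq_sqrt hL.le]
    _ ≤ w * (exp (-(L - log L + 28)) / (2 * √h)) := by gcongr

theorem sqrt_mul_exp_neg_div_le_fairBinomialTail {n : ℕ} {L : ℝ} (hL : 6 ≤ L) (hn : exp L ≤ n) :
    √L * exp (-L) / (1.5 * exp (169 / 6) * √π) ≤ fairBinomialTail n √(n * (L - log L) / 2) := by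
  have hL0 : 0 < L := by linarith
  have hlog : 1 ≤ log L := (le_log_iff_exp_le hL0).2 (by linarith [exp_one_lt_d9])
  have hM0 : 0 ≤ L - log L := by linarith [log_le_sub_one_of_pos hL0]
  have hh : L ^ 3 ≤ 4 * (n / 2 : ℕ) := pow_three_le_four_mul_half hL hn
  have hh0 : (0 : ℝ) < (n / 2 : ℕ) := by linarith [pow_pos hL0 3]
  have hn2 : (n : ℝ) ≤ 2 * (n / 2 : ℕ) + 1 := by norm_cast; omega
  set t := √(n * (L - log L) / 2)
  have ht : t ≤ √(((n / 2 : ℕ) + 1 / 2) * (L - log L)) :=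
    Real.sqrt_le_sqrt (by nlinarith)
  set a := ⌈t + 1 / 2⌉₊
  set w := ⌈√((n / 2 : ℕ) / L)⌉₊
  have ha : t + 1 / 2 ≤ a := Nat.le_ceil _
  have ha' : (a : ℝ) < t + 1 / 2 + 1 := Nat.ceil_lt_add_one (by positivity)
  have hw' : (w : ℝ) < √((n / 2 : ℕ) / L) + 1 := Nat.ceil_lt_add_one (by positivity)
  obtain ⟨hlt, hexponent⟩ := lt_and_sq_div_sub_le hL hh hM0 (by linarith) (by positivity)
    (sq_le_mul_add_seven (a := (a + w : ℕ)) hL hh hM0 (by linarith) (by positivity)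
      (by push_cast; linarith))
  calc √L * exp (-L) / (1.5 * exp (169 / 6) * √π)
      ≤ w * (exp (-(L - log L + 28)) / (2 * √(n / 2 : ℕ))) :=
        sqrt_mul_exp_neg_div_le hL0 hh0 (Nat.le_ceil _)
    _ ≤ w * (exp (-(((a + w : ℕ) : ℝ) ^ 2 / ((n / 2 : ℕ) - (a + w : ℕ)))) /
          (2 * √(n / 2 : ℕ))) := by gcongr
    _ ≤ fairBinomialTail n t :=
        mul_exp_neg_div_two_sqrt_le_fairBinomialTail (Nat.one_le_ceil_iff.2 (by positivity))
          (by exact_mod_cast hlt) (by linarith)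

end FairBinomialTail

section Cubes

variable {m d : ℕ}

/-- The uniform distribution on the grid cube with index `x`, i.e. the law of its sample point. -/
def cubeUniform (x : Fin d → Fin m) : Measure (Fin d → ℝ) :=
  (m : ENNReal) ^ d • volume.restrict (jitterCube m d x)

theorem measurableSet_jitterCube (x : Fin d → Fin m) : MeasurableSet (jitterCube m d x) :=
  .univ_pi fun _ => measurableSet_Ico

theorem ae_mem_jitterCube (x : Fin d → Fin m) : ∀ᵐ p ∂cubeUniform x, p ∈ jitterCube m d x :=
  Measure.ae_smul_measure (ae_restrict_mem (measurableSet_jitterCube x)) _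

theorem jitterMeasure_eq_pi : jitterMeasure m d = Measure.pi cubeUniform := rfl

/-- The contribution of the sample point `p` of the grid cube with index `x` to the signed
discrepancy of `A`. -/
def cubeDisc (x : Fin d → Fin m) (A : Set (Fin d → ℝ)) (p : Fin d → ℝ) : ℝ :=
  A.indicator 1 p - (cubeUniform x).real A

theorem measurable_cubeDisc (x : Fin d → Fin m) {A : Set (Fin d → ℝ)} (hA : MeasurableSet A) :
    Measurable (cubeDisc x A) :=
  (measurable_one.indicator hA).sub_const _

theorem cubeDisc_congr {x : Fin d → Fin m} {A B : Set (Fin d → ℝ)}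
    (hAB : ∀ q ∈ jitterCube m d x, q ∈ A ↔ q ∈ B) {p : Fin d → ℝ} (hp : p ∈ jitterCube m d x) :
    cubeDisc x A p = cubeDisc x B p := by
  classical
  have hmeas : (cubeUniform x).real A = (cubeUniform x).real B :=
    measureReal_congr <| (ae_mem_jitterCube x).mono fun q hq => propext (hAB q hq)
  simp only [cubeDisc, hmeas, Set.indicator_apply, hAB p hp]

/-- The lower half, in direction `i`, of the grid cube with index `x`, extended to a half-space. -/
def lowerHalf (x : Fin d → Fin m) (i : Fin d) : Set (Fin d → ℝ) :=
  {p | p i * m < x i + 1 / 2}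

theorem measurableSet_lowerHalf (x : Fin d → Fin m) (i : Fin d) :
    MeasurableSet (lowerHalf x i) :=
  measurableSet_lt ((measurable_pi_apply i).mul_const _) measurable_const

variable [NeZero m]

theorem mem_jitterCube_iff {x : Fin d → Fin m} {p : Fin d → ℝ} :
    p ∈ jitterCube m d x ↔ ∀ i, (x i : ℝ) ≤ p i * m ∧ p i * m < x i + 1 := by
  have hm : (0 : ℝ) < m := mod_cast NeZero.pos m
  simp only [jitterCube, Set.mem_univ_pi, Set.mem_Ico, ← add_div, div_le_iff₀ hm, lt_div_iff₀ hm]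

theorem mem_jitterCube_iff_floor {x : Fin d → Fin m} {p : Fin d → ℝ} :
    p ∈ jitterCube m d x ↔ ∀ i, ⌊p i * m⌋ = (x i : ℕ) := by
  simp only [mem_jitterCube_iff, Int.floor_eq_iff, Int.cast_natCast]

theorem pairwise_disjoint_jitterCube : Pairwise (Function.onFun Disjoint (jitterCube m d)) :=
  fun x z hxz => Set.disjoint_left.2 fun p hpx hpz => hxz <| funext fun i => Fin.ext <| by
    exact_mod_cast (mem_jitterCube_iff_floor.1 hpx i).symm.trans (mem_jitterCube_iff_floor.1 hpz i)

theorem iUnion_jitterCube : ⋃ x, jitterCube m d x = Set.univ.pi fun _ => Set.Ico 0 1 := by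
  have hm : (0 : ℝ) < m := mod_cast NeZero.pos m
  ext p
  simp only [Set.mem_iUnion, Set.mem_univ_pi, Set.mem_Ico]
  constructor
  · rintro ⟨x, hx⟩ i
    rw [mem_jitterCube_iff] at hx
    have hxm : (x i : ℝ) + 1 ≤ m := mod_cast (x i).2
    exact ⟨nonneg_of_mul_nonneg_left ((Nat.cast_nonneg _).trans (hx i).1) hm,
      lt_of_mul_lt_mul_right (by linarith [hx i]) hm.le⟩
  · intro hp
    have hlt : ∀ i, ⌊p i * m⌋₊ < m := fun i =>
      (Nat.floor_lt (mul_nonneg (hp i).1 hm.le)).2 (by nlinarith [hp i])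
    refine ⟨fun i => ⟨⌊p i * m⌋₊, hlt i⟩, mem_jitterCube_iff_floor.2 fun i => ?_⟩
    exact (Int.natCast_floor_eq_floor (mul_nonneg (hp i).1 hm.le)).symm

theorem cubeUniform_real_pi_Ico (x : Fin d → Fin m) {b : Fin d → ℝ} (hb0 : ∀ i, 0 ≤ b i)
    (hb1 : ∀ i, b i ≤ 1) :
    (cubeUniform x).real (Set.univ.pi fun i => Set.Ico ((x i : ℝ) / m) ((x i : ℝ) / m + b i / m)) =
      ∏ i, b i := by
  have hm : (0 : ℝ) < m := mod_cast NeZero.pos m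
  have hsub : (Set.univ.pi fun i => Set.Ico ((x i : ℝ) / m) ((x i : ℝ) / m + b i / m)) ⊆
      jitterCube m d x :=
    Set.pi_mono fun i _ => Set.Ico_subset_Ico_right (by gcongr; exact hb1 i)
  rw [cubeUniform, measureReal_ennreal_smul_apply,
    measureReal_restrict_apply (.univ_pi fun _ => measurableSet_Ico), Set.inter_eq_left.2 hsub,
    measureReal_def, Real.volume_pi_Ico_toReal fun i => by
      have := hb0 i
      simp only [le_add_iff_nonneg_right]
      positivity]
  simp only [add_sub_cancel_left, Finset.prod_div_distrib]
  simp
  field_simp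

instance isProbabilityMeasure_cubeUniform (x : Fin d → Fin m) :
    IsProbabilityMeasure (cubeUniform x) := by
  have hcube : (cubeUniform x).real (jitterCube m d x) = 1 := by
    simpa [jitterCube] using cubeUniform_real_pi_Ico x (b := 1) (by simp) (by simp)
  rw [isProbabilityMeasure_iff_real, ← hcube]
  exact measureReal_congr (Filter.eventuallyEq_univ.2 (ae_mem_jitterCube x)).symm

instance isProbabilityMeasure_jitterMeasure : IsProbabilityMeasure (jitterMeasure m d) :=
  inferInstanceAs (IsProbabilityMeasure (Measure.pi cubeUniform))

theorem ae_forall_mem_jitterCube :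
    ∀ᵐ P ∂jitterMeasure m d, ∀ x, P x ∈ jitterCube m d x :=
  ae_all_iff.2 fun x =>
    (measurePreserving_eval cubeUniform x).quasiMeasurePreserving.ae (ae_mem_jitterCube x)

theorem pow_mul_volume_eq_sum_cubeUniform {A : Set (Fin d → ℝ)} (hA : MeasurableSet A)
    (hA1 : A ⊆ Set.univ.pi fun _ => Set.Ico 0 1) :
    (m : ℝ) ^ d * (volume A).toReal = ∑ x : Fin d → Fin m, (cubeUniform x).real A := by
  have hvol : volume A = ∑ x : Fin d → Fin m, volume.restrict (jitterCube m d x) A := by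
    have hsum := Measure.restrict_iUnion_apply (μ := volume)
      (pairwise_disjoint_jitterCube (m := m)) measurableSet_jitterCube hA
    rwa [iUnion_jitterCube, Measure.restrict_apply hA, Set.inter_eq_left.2 hA1,
      tsum_fintype] at hsum
  have hmul : (m : ENNReal) ^ d * volume A = ∑ x : Fin d → Fin m, cubeUniform x A := by
    simp only [hvol, Finset.mul_sum, cubeUniform, Measure.smul_apply, smul_eq_mul]
  simpa [measureReal_def, ENNReal.toReal_sum] using congrArg ENNReal.toReal hmul

theorem jdisc_eq_sum_cubeDisc (P : (Fin d → Fin m) → Fin d → ℝ) {A : Set (Fin d → ℝ)}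
    (hA : MeasurableSet A) (hA1 : A ⊆ Set.univ.pi fun _ => Set.Ico 0 1) :
    jdisc m d P A = ∑ x, cubeDisc x A (P x) := by
  classical
  simp only [jdisc, cubeDisc, Finset.sum_sub_distrib, pow_mul_volume_eq_sum_cubeUniform hA hA1,
    Set.indicator_apply, Pi.one_apply, Finset.sum_boole]

theorem abs_cubeDisc_le_one (x : Fin d → Fin m) (A : Set (Fin d → ℝ)) (p : Fin d → ℝ) :
    |cubeDisc x A p| ≤ 1 := by
  have h0 : 0 ≤ (cubeUniform x).real A := measureReal_nonneg
  have h1 : (cubeUniform x).real A ≤ 1 := measureReal_le_one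
  rw [cubeDisc, abs_le]
  by_cases hp : p ∈ A <;> simp [hp] <;> linarith

theorem integral_cubeDisc (x : Fin d → Fin m) {A : Set (Fin d → ℝ)} (hA : MeasurableSet A) :
    ∫ p, cubeDisc x A p ∂cubeUniform x = 0 := by
  simp only [cubeDisc]
  rw [integral_sub (.indicator (integrable_const _) hA) (integrable_const _),
    integral_indicator_one hA]
  simp

theorem cubeUniform_real_lowerHalf (x : Fin d → Fin m) (i : Fin d) :
    (cubeUniform x).real (lowerHalf x i) = 1 / 2 := by
  have hm : (0 : ℝ) < m := mod_cast NeZero.pos m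
  have hprod := cubeUniform_real_pi_Ico x (b := fun l => if l = i then 1 / 2 else 1)
    (fun l => by split_ifs <;> norm_num) (fun l => by split_ifs <;> norm_num)
  rw [Finset.prod_ite_eq' Finset.univ i, if_pos (Finset.mem_univ i)] at hprod
  rw [← hprod]
  refine measureReal_congr ((ae_mem_jitterCube x).mono fun q hq => propext ?_)
  rw [mem_jitterCube_iff] at hq
  change q i * m < x i + 1 / 2 ↔ q ∈ Set.univ.pi _
  simp only [Set.mem_univ_pi, Set.mem_Ico, ← add_div, div_le_iff₀ hm, lt_div_iff₀ hm]
  refine ⟨fun h l => ⟨(hq l).1, ?_⟩, fun h => by simpa using (h i).2⟩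
  split_ifs with hl
  exacts [hl ▸ h, (hq l).2]

/-- The anchored box whose upper corner is the point `H` of the grid of mesh `1 / (2 * m)`. -/
def halfGridBox (m : ℕ) {d : ℕ} (H : Fin d → ℕ) : Set (Fin d → ℝ) :=
  anchoredBox d fun i => (H i : ℝ) / (2 * m)

theorem mem_halfGridBox_iff_of_mem_jitterCube {x : Fin d → Fin m} {i : Fin d} {H : Fin d → ℕ}
    (hH : ∀ l ≠ i, 2 * (x l + 1 : ℕ) ≤ H l) {q : Fin d → ℝ} (hq : q ∈ jitterCube m d x) :
    q ∈ halfGridBox m H ↔ q i * m < H i / 2 := by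
  have hm : (0 : ℝ) < m := mod_cast NeZero.pos m
  rw [mem_jitterCube_iff] at hq
  have hbox : q ∈ halfGridBox m H ↔ ∀ l, 0 ≤ q l ∧ q l * m < H l / 2 := by
    simp only [halfGridBox, anchoredBox, Set.mem_univ_pi, Set.mem_Ico, ← div_div, lt_div_iff₀ hm]
  rw [hbox]
  refine ⟨fun h => (h i).2, fun h l => ⟨?_, ?_⟩⟩
  · exact nonneg_of_mul_nonneg_left ((Nat.cast_nonneg _).trans (hq l).1) hm
  · obtain rfl | hl := eq_or_ne l i
    · exact h
    · have : 2 * ((x l : ℝ) + 1) ≤ H l := mod_cast hH l hl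
      linarith [(hq l).2]

theorem cubeDisc_halfGridBox {x : Fin d → Fin m} {i : Fin d} {H : Fin d → ℕ}
    (hH : ∀ l ≠ i, 2 * (x l + 1 : ℕ) ≤ H l) {p : Fin d → ℝ} (hp : p ∈ jitterCube m d x) :
    cubeDisc x (halfGridBox m H) p =
      if H i = 2 * x i + 1 then cubeDisc x (lowerHalf x i) p else 0 := by
  have hcut : ∀ q ∈ jitterCube m d x, q ∈ halfGridBox m H ↔ q i * m < H i / 2 :=
    fun q hq => mem_halfGridBox_iff_of_mem_jitterCube hH hq
  have hbounds : ∀ q ∈ jitterCube m d x, (x i : ℝ) ≤ q i * m ∧ q i * m < x i + 1 :=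
    fun q hq => mem_jitterCube_iff.1 hq i
  rcases lt_trichotomy (H i) (2 * x i + 1) with h | h | h
  · have hle : (H i : ℝ) ≤ 2 * x i := by exact_mod_cast Nat.lt_succ_iff.1 h
    rw [if_neg h.ne, cubeDisc_congr (B := ∅) (fun q hq => ?_) hp]
    · simp [cubeDisc]
    · simp only [hcut q hq, Set.mem_empty_iff_false, iff_false]
      linarith [hbounds q hq]
  · rw [if_pos h, cubeDisc_congr (fun q hq => ?_) hp]
    rw [hcut q hq, h, lowerHalf, Set.mem_ofPred_eq]
    push_cast
    rw [add_div, mul_div_cancel_left₀ _ two_ne_zero]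
  · have hle : 2 * ((x i : ℝ) + 1) ≤ H i := by exact_mod_cast h
    rw [if_neg h.ne', cubeDisc_congr (B := Set.univ) (fun q hq => ?_) hp]
    · simp [cubeDisc]
    · simp only [hcut q hq, Set.mem_univ, iff_true]
      linarith [hbounds q hq]

end Cubes

section StarDiscrepancy

open Filter Topology

variable {m d : ℕ}

theorem measurableSet_anchoredBox (y : Fin d → ℝ) : MeasurableSet (anchoredBox d y) :=
  .univ_pi fun _ => measurableSet_Ico

theorem anchoredBox_mono : Monotone (anchoredBox d) :=
  fun _ _ hyz => Set.pi_mono fun i _ => Set.Ico_subset_Ico_right (hyz i)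

theorem iUnion_anchoredBox_rat {y : Fin d → ℝ} :
    ⋃ q : {q : Fin d → ℚ // ∀ i, (q i : ℝ) ∈ Set.Icc 0 (y i)}, anchoredBox d (fun i => q.1 i) =
      anchoredBox d y := by
  refine Set.Subset.antisymm (Set.iUnion_subset fun q => anchoredBox_mono fun i => (q.2 i).2) ?_
  intro p hp
  have hp : ∀ i, 0 ≤ p i ∧ p i < y i := by simpa [anchoredBox] using hp
  choose q hpq hqy using fun i => exists_rat_btwn (hp i).2
  refine Set.mem_iUnion.2 ⟨⟨q, fun i => ⟨(hp i).1.trans (hpq i).le, (hqy i).le⟩⟩, ?_⟩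
  simpa [anchoredBox] using fun i => ⟨(hp i).1, hpq i⟩

variable [NeZero m]

theorem tendsto_cubeDisc_iUnion {ι : Type*} [Preorder ι] [IsCountablyGenerated (atTop : Filter ι)]
    (x : Fin d → Fin m) {A : ι → Set (Fin d → ℝ)} (hA : Monotone A) (p : Fin d → ℝ) :
    Tendsto (fun n => cubeDisc x (A n) p) atTop (𝓝 (cubeDisc x (⋃ n, A n) p)) :=
  (hA.tendsto_indicator A 1 p |>.mono_right (pure_le_nhds _)).sub <|
    (ENNReal.tendsto_toReal (measure_ne_top _ _)).comp (tendsto_measure_iUnion_atTop hA)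

theorem jdisc_anchoredBox_eq_sum (P : (Fin d → Fin m) → Fin d → ℝ) {y : Fin d → ℝ}
    (hy : ∀ i, y i ∈ Set.Ico (0 : ℝ) 1) :
    jdisc m d P (anchoredBox d y) = ∑ x, cubeDisc x (anchoredBox d y) (P x) :=
  jdisc_eq_sum_cubeDisc P (measurableSet_anchoredBox y) (anchoredBox_mono fun i => (hy i).2.le)

theorem abs_jdisc_anchoredBox_le (P : (Fin d → Fin m) → Fin d → ℝ) {y : Fin d → ℝ}
    (hy : ∀ i, y i ∈ Set.Ico (0 : ℝ) 1) : |jdisc m d P (anchoredBox d y)| ≤ m ^ d := by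
  rw [jdisc_anchoredBox_eq_sum P hy]
  calc |∑ x, cubeDisc x (anchoredBox d y) (P x)|
      ≤ ∑ x, |cubeDisc x (anchoredBox d y) (P x)| := Finset.abs_sum_le_sum_abs _ _
    _ ≤ ∑ _x : Fin d → Fin m, 1 := Finset.sum_le_sum fun x _ => abs_cubeDisc_le_one x _ _
    _ = m ^ d := by simp

theorem abs_jdisc_anchoredBox_le_starDisc (P : (Fin d → Fin m) → Fin d → ℝ) {y : Fin d → ℝ}
    (hy : ∀ i, y i ∈ Set.Ico (0 : ℝ) 1) :
    |jdisc m d P (anchoredBox d y)| ≤ starDisc m d P :=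
  le_ciSup (f := fun y : {y : Fin d → ℝ // ∀ i, y i ∈ Set.Ico (0 : ℝ) 1} =>
      |jdisc m d P (anchoredBox d y.1)|)
    ⟨m ^ d, Set.forall_mem_range.2 fun y => abs_jdisc_anchoredBox_le P y.2⟩ ⟨y, hy⟩

theorem abs_starDisc_le (P : (Fin d → Fin m) → Fin d → ℝ) : |starDisc m d P| ≤ m ^ d := by
  have hzero : ∀ i : Fin d, (0 : Fin d → ℝ) i ∈ Set.Ico (0 : ℝ) 1 := by simp
  have : Nonempty {y : Fin d → ℝ // ∀ i, y i ∈ Set.Ico (0 : ℝ) 1} := ⟨0, hzero⟩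
  rw [abs_of_nonneg ((abs_nonneg _).trans (abs_jdisc_anchoredBox_le_starDisc P hzero))]
  exact ciSup_le fun y => abs_jdisc_anchoredBox_le P y.2

theorem le_of_forall_rat_abs_jdisc_le (P : (Fin d → Fin m) → Fin d → ℝ) {y : Fin d → ℝ}
    (hy : ∀ i, y i ∈ Set.Ico (0 : ℝ) 1) {c : ℝ}
    (hc : ∀ q : Fin d → ℚ, (∀ i, (q i : ℝ) ∈ Set.Ico 0 1) →
      |jdisc m d P (anchoredBox d fun i => q i)| ≤ c) :
    |jdisc m d P (anchoredBox d y)| ≤ c := by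
  let Q := {q : Fin d → ℚ // ∀ i, (q i : ℝ) ∈ Set.Icc 0 (y i)}
  have hQ : ∀ (q : Q) i, (q.1 i : ℝ) ∈ Set.Ico (0 : ℝ) 1 :=
    fun q i => ⟨(q.2 i).1, (q.2 i).2.trans_lt (hy i).2⟩
  have : Nonempty Q := ⟨0, fun i => by simpa using (hy i).1⟩
  have : IsDirectedOrder Q := ⟨fun q r => ⟨⟨q.1 ⊔ r.1, fun i => by
    simpa using ⟨Or.inl (Rat.cast_nonneg.1 (q.2 i).1), (q.2 i).2, (r.2 i).2⟩⟩,
    Subtype.coe_le_coe.1 le_sup_left, Subtype.coe_le_coe.1 le_sup_right⟩⟩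
  have hmono : Monotone fun q : Q => anchoredBox d fun i => (q.1 i : ℝ) :=
    fun q r hqr => anchoredBox_mono fun i => Rat.cast_le.2 (hqr i)
  have hlim : Tendsto (fun q : Q => jdisc m d P (anchoredBox d fun i => (q.1 i : ℝ))) atTop
      (𝓝 (jdisc m d P (anchoredBox d y))) := by
    simp only [jdisc_anchoredBox_eq_sum P hy, jdisc_anchoredBox_eq_sum P (hQ _)]
    rw [← iUnion_anchoredBox_rat]
    exact tendsto_finsetSum _ fun x _ => tendsto_cubeDisc_iUnion x hmono (P x)
  exact le_of_tendsto hlim.abs (.of_forall fun q => hc q.1 (hQ q))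

theorem starDisc_eq_iSup_rat (P : (Fin d → Fin m) → Fin d → ℝ) :
    starDisc m d P = ⨆ q : {q : Fin d → ℚ // ∀ i, (q i : ℝ) ∈ Set.Ico (0 : ℝ) 1},
      |jdisc m d P (anchoredBox d fun i => q.1 i)| := by
  have : Nonempty {y : Fin d → ℝ // ∀ i, y i ∈ Set.Ico (0 : ℝ) 1} := ⟨0, by simp⟩
  have : Nonempty {q : Fin d → ℚ // ∀ i, (q i : ℝ) ∈ Set.Ico (0 : ℝ) 1} := ⟨0, by simp⟩
  refine le_antisymm (ciSup_le fun y => le_of_forall_rat_abs_jdisc_le P y.2 fun q hq => ?_)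
    (ciSup_le fun q => abs_jdisc_anchoredBox_le_starDisc P q.2)
  exact le_ciSup (f := fun q : {q : Fin d → ℚ // ∀ i, (q i : ℝ) ∈ Set.Ico (0 : ℝ) 1} =>
      |jdisc m d P (anchoredBox d fun i => q.1 i)|)
    ⟨m ^ d, Set.forall_mem_range.2 fun q => abs_jdisc_anchoredBox_le P q.2⟩ ⟨q, hq⟩

theorem measurable_starDisc : Measurable (starDisc m d) := by
  simp only [funext starDisc_eq_iSup_rat]
  refine .iSup fun q => ?_
  simp only [jdisc_anchoredBox_eq_sum _ q.2]
  exact (Finset.measurable_sum _ fun x _ =>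
    (measurable_cubeDisc x (measurableSet_anchoredBox _)).comp (measurable_pi_apply x)).abs

theorem integrable_starDisc : Integrable (starDisc m d) (jitterMeasure m d) :=
  .of_bound measurable_starDisc.aestronglyMeasurable (m ^ d) (.of_forall abs_starDisc_le)

end StarDiscrepancy

section Slabs

variable {m d : ℕ}

/-- The slab of grid cubes at height `s` in direction `i` whose other coordinates are below `r`. -/
def slab (m r : ℕ) (i : Fin d) (s : ℕ) : Finset (Fin d → Fin m) :=
  {x | (x i : ℕ) = s ∧ ∀ l ≠ i, (x l : ℕ) < r}

theorem mem_slab {r s : ℕ} {i : Fin d} {x : Fin d → Fin m} :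
    x ∈ slab m r i s ↔ (x i : ℕ) = s ∧ ∀ l ≠ i, (x l : ℕ) < r := by
  simp [slab]

theorem card_slab {r s : ℕ} (hr : r ≤ m) (i : Fin d) (hs : s < m) :
    (slab m r i s).card = r ^ (d - 1) := by
  classical
  let low : Finset (Fin m) := {j | (j : ℕ) < r}
  have hlow : low.card = r := by rw [Fin.card_filter_val_lt, min_eq_right hr]
  have hpi : slab m r i s =
      Fintype.piFinset (Function.update (fun _ => low) i {⟨s, hs⟩}) := by
    ext x
    simp only [mem_slab, Fintype.mem_piFinset]
    rw [Function.forall_update_iff _ (fun l (T : Finset (Fin m)) => x l ∈ T)]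
    simp [low, Fin.ext_iff]
  simp only [hpi, Fintype.card_piFinset, Function.apply_update (fun _ => Finset.card),
    Finset.prod_update_of_mem (Finset.mem_univ i), hlow]
  simp [Finset.card_sdiff]

theorem disjoint_slab {r s s' : ℕ} {i i' : Fin d} (hs : r ≤ s) (hne : (i, s) ≠ (i', s')) :
    Disjoint (slab m r i s) (slab m r i' s') := by
  refine Finset.disjoint_left.2 fun x hx hx' => hne ?_
  rw [mem_slab] at hx hx'
  have hi : i = i' := by
    by_contra hi
    exact (hs.trans_eq hx.1.symm).not_gt (hx'.2 i hi)
  subst hi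
  rw [← hx.1, ← hx'.1]

/-- The discrepancy, over the cubes of a slab, of their lower halves. -/
def slabDisc (r : ℕ) (i : Fin d) (s : ℕ) (P : (Fin d → Fin m) → Fin d → ℝ) : ℝ :=
  ∑ x ∈ slab m r i s, cubeDisc x (lowerHalf x i) (P x)

theorem measurable_slabDisc (r : ℕ) (i : Fin d) (s : ℕ) :
    Measurable (slabDisc (m := m) r i s) :=
  Finset.measurable_sum _ fun x _ =>
    (measurable_cubeDisc x (measurableSet_lowerHalf x i)).comp (measurable_pi_apply x)

theorem dependsOn_slabDisc (r : ℕ) (i : Fin d) (s : ℕ) :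
    DependsOn (slabDisc (m := m) r i s) (slab m r i s) :=
  fun P Q hPQ => Finset.sum_congr rfl fun x hx => by rw [hPQ x hx]

theorem slabDisc_eq_ncard_sub [NeZero m] (r : ℕ) (i : Fin d) (s : ℕ)
    (P : (Fin d → Fin m) → Fin d → ℝ) :
    slabDisc r i s P = {x : slab m r i s | P x ∈ lowerHalf x.1 i}.ncard -
      ((slab m r i s).card : ℝ) / 2 := by
  classical
  simp only [slabDisc, cubeDisc, cubeUniform_real_lowerHalf, Finset.sum_sub_distrib,
    Set.indicator_apply, Pi.one_apply, Set.ncard_eq_toFinset_card', Finset.sum_const]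
  rw [← Finset.sum_coe_sort, Finset.sum_boole]
  simp [div_eq_mul_inv]

theorem measureReal_le_slabDisc [NeZero m] {r s : ℕ} (hr : r ≤ m) (i : Fin d) (hs : s < m)
    (t : ℝ) :
    (jitterMeasure m d).real {P | t ≤ slabDisc r i s P} = fairBinomialTail (r ^ (d - 1)) t := by
  let X : slab m r i s → ((Fin d → Fin m) → Fin d → ℝ) → Prop := fun x P => P x ∈ lowerHalf x.1 i
  have hX : ∀ x, Measurable (X x) := fun x =>
    (measurable_mem.2 (measurableSet_lowerHalf x.1 i)).comp (measurable_pi_apply x.1)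
  have hind : iIndepFun X (Measure.pi cubeUniform) :=
    (iIndepFun_pi (X := fun x p => p ∈ lowerHalf x i) fun x =>
      (measurable_mem.2 (measurableSet_lowerHalf x i)).aemeasurable).precomp
        Subtype.val_injective
  have hhalf : ∀ x, (Measure.pi cubeUniform).real {P | X x P} = 1 / 2 := fun x => by
    rw [← cubeUniform_real_lowerHalf x.1 i]
    exact (measurePreserving_eval cubeUniform x.1).measureReal_preimage
      (measurableSet_lowerHalf x.1 i).nullMeasurableSet
  have hlaw := hasLaw_ncard_binomial hX hind (p := ⟨1 / 2, by norm_num, by norm_num⟩) hhalf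
  rw [Fintype.card_coe, card_slab hr i hs] at hlaw
  rw [fairBinomialTail, ← hlaw.map_eq, measureReal_def, measureReal_def,
    Measure.map_apply_of_aemeasurable hlaw.aemeasurable .of_discrete, jitterMeasure_eq_pi]
  simp only [slabDisc_eq_ncard_sub, card_slab hr i hs, Set.preimage_ofPred_eq, Nat.cast_pow]
  congr! 4 with P
  rw [le_sub_iff_add_le, add_comm]

end Slabs

section RandomCorner

variable {m d : ℕ}

open scoped Classical in
/-- The upper corner, in units of `1 / (2 * m)`, of the test box: in each direction it cuts in half
the highest slab of discrepancy at least `t`, or stays at height `r` if there is no such slab. -/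
def cornerIndex (r : ℕ) (t : ℝ) (P : (Fin d → Fin m) → Fin d → ℝ) (i : Fin d) : ℕ :=
  2 * r ⊔ (Finset.Ico r m).sup fun s => if t ≤ slabDisc r i s P then 2 * s + 1 else 0

theorem two_mul_le_cornerIndex (r : ℕ) (t : ℝ) (P : (Fin d → Fin m) → Fin d → ℝ) (i : Fin d) :
    2 * r ≤ cornerIndex r t P i :=
  le_sup_left

theorem cornerIndex_eq_or_exists {r : ℕ} (hr : r < m) (t : ℝ)
    (P : (Fin d → Fin m) → Fin d → ℝ) (i : Fin d) :
    (cornerIndex r t P i = 2 * r ∧ ∀ s ∈ Finset.Ico r m, slabDisc r i s P < t) ∨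
      ∃ s ∈ Finset.Ico r m, cornerIndex r t P i = 2 * s + 1 ∧ t ≤ slabDisc r i s P := by
  classical
  obtain ⟨s, hs, hsup⟩ := Finset.exists_mem_eq_sup (Finset.Ico r m) (Finset.nonempty_Ico.2 hr)
    fun s => if t ≤ slabDisc r i s P then 2 * s + 1 else 0
  have hrs := (Finset.mem_Ico.1 hs).1
  by_cases hts : t ≤ slabDisc r i s P
  · refine .inr ⟨s, hs, ?_, hts⟩
    rw [cornerIndex, hsup, if_pos hts, sup_eq_right]
    lia
  · rw [if_neg hts] at hsup
    refine .inl ⟨by rw [cornerIndex, hsup]; simp, fun s' hs' => ?_⟩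
    by_contra! hts'
    simpa [hts'] using (Finset.sup_eq_bot_iff _ _).1 hsup s' hs'

theorem cornerIndex_lt {r : ℕ} (hr : r < m) (t : ℝ) (P : (Fin d → Fin m) → Fin d → ℝ)
    (i : Fin d) : cornerIndex r t P i < 2 * m := by
  rcases cornerIndex_eq_or_exists hr t P i with ⟨h, -⟩ | ⟨s, hs, h, -⟩
  · lia
  · have := (Finset.mem_Ico.1 hs).2
    lia

theorem measurable_cornerIndex (r : ℕ) (t : ℝ) :
    Measurable (cornerIndex (m := m) (d := d) r t) := by
  classical
  have hterm : ∀ (i : Fin d) (s : ℕ), Measurable fun P : (Fin d → Fin m) → Fin d → ℝ =>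
      if t ≤ slabDisc r i s P then 2 * s + 1 else 0 := fun i s =>
    .ite (measurableSet_le measurable_const (measurable_slabDisc r i s)) measurable_const
      measurable_const
  refine measurable_pi_lambda _ fun i => measurable_const.sup ?_
  induction Finset.Ico r m using Finset.induction_on with
  | empty => simp
  | insert s K _ ih =>
    simp only [Finset.sup_insert]
    exact (hterm i s).sup ih

/-- The grid cubes lying in one of the slabs. -/
def slabCubes (m d r : ℕ) : Finset (Fin d → Fin m) :=
  open scoped Classical in
  (Finset.univ ×ˢ Finset.Ico r m).biUnion fun a : Fin d × ℕ => slab m r a.1 a.2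

theorem sum_slabCubes (r : ℕ) (f : (Fin d → Fin m) → ℝ) :
    ∑ x ∈ slabCubes m d r, f x = ∑ i, ∑ s ∈ Finset.Ico r m, ∑ x ∈ slab m r i s, f x := by
  rw [slabCubes, Finset.sum_biUnion, Finset.sum_product]
  intro a ha b _ hab
  exact disjoint_slab (by simp_all) hab

theorem dependsOn_cornerIndex (r : ℕ) (t : ℝ) :
    DependsOn (cornerIndex (m := m) (d := d) r t) (slabCubes m d r) := by
  intro P Q hPQ
  funext i
  refine congrArg (2 * r ⊔ ·) (Finset.sup_congr rfl fun s hs => ?_)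
  rw [dependsOn_slabDisc r i s fun x hx => hPQ x ?_]
  exact Finset.mem_biUnion.2 ⟨(i, s), by simpa using hs, hx⟩

/-- The contribution of the cube with index `x` to the discrepancy of the random test box. -/
def cornerDisc (r : ℕ) (t : ℝ) (x : Fin d → Fin m) (P : (Fin d → Fin m) → Fin d → ℝ) : ℝ :=
  cubeDisc x (halfGridBox m (cornerIndex r t P)) (P x)

theorem measurableSet_halfGridBox (H : Fin d → ℕ) : MeasurableSet (halfGridBox m H) :=
  measurableSet_anchoredBox _

theorem measurable_cubeDisc_halfGridBox (x : Fin d → Fin m) :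
    Measurable (Function.uncurry fun H => cubeDisc x (halfGridBox m H)) :=
  measurable_from_prod_countable_right fun _ => measurable_cubeDisc x (measurableSet_halfGridBox _)

/-- The event that some slab in direction `i` has discrepancy at least `t`. -/
def hitEvent (m r : ℕ) {d : ℕ} (t : ℝ) (i : Fin d) : Set ((Fin d → Fin m) → Fin d → ℝ) :=
  ⋃ s ∈ Finset.Ico r m, {P | t ≤ slabDisc r i s P}

theorem measurableSet_hitEvent (r : ℕ) (t : ℝ) (i : Fin d) : MeasurableSet (hitEvent m r t i) :=
  Finset.measurableSet_biUnion _ fun s _ =>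
    measurableSet_le measurable_const (measurable_slabDisc r i s)

variable [NeZero m]

theorem integrable_cornerDisc (r : ℕ) (t : ℝ) (x : Fin d → Fin m) :
    Integrable (cornerDisc r t x) (jitterMeasure m d) :=
  .of_bound ((measurable_cubeDisc_halfGridBox x).comp
    ((measurable_cornerIndex r t).prodMk (measurable_pi_apply x))).aestronglyMeasurable 1
    (.of_forall fun _ => abs_cubeDisc_le_one x _ _)

theorem integral_cornerDisc_of_notMem {r : ℕ} (t : ℝ) {x : Fin d → Fin m}
    (hx : x ∉ slabCubes m d r) : ∫ P, cornerDisc r t x P ∂jitterMeasure m d = 0 := by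
  have hind : IndepFun (cornerIndex r t) (fun P => P x) (Measure.pi cubeUniform) :=
    indepFun_pi_of_dependsOn (measurable_cornerIndex r t) (measurable_pi_apply x)
      (Finset.disjoint_singleton_right.2 hx) (dependsOn_cornerIndex r t)
      fun P Q hPQ => hPQ x (by simp)
  refine integral_comp_eq_zero_of_indepFun (measurable_cornerIndex r t).aemeasurable
    (measurable_pi_apply x).aemeasurable hind (measurable_cubeDisc_halfGridBox x) fun H => ?_
  rw [(measurePreserving_eval cubeUniform x).map_eq]
  exact integral_cubeDisc x (measurableSet_halfGridBox H)

theorem sum_cornerDisc_le_starDisc {r : ℕ} (hr : r < m) (t : ℝ)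
    (P : (Fin d → Fin m) → Fin d → ℝ) : ∑ x, cornerDisc r t x P ≤ starDisc m d P := by
  have hm : (0 : ℝ) < m := mod_cast NeZero.pos m
  have hy : ∀ i, (cornerIndex r t P i : ℝ) / (2 * m) ∈ Set.Ico (0 : ℝ) 1 := fun i =>
    ⟨by positivity, (div_lt_one (by positivity)).2 (mod_cast cornerIndex_lt hr t P i)⟩
  calc ∑ x, cornerDisc r t x P
      = jdisc m d P (halfGridBox m (cornerIndex r t P)) := (jdisc_anchoredBox_eq_sum P hy).symm
    _ ≤ |jdisc m d P (halfGridBox m (cornerIndex r t P))| := le_abs_self _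
    _ ≤ starDisc m d P := abs_jdisc_anchoredBox_le_starDisc P hy

theorem integral_sum_slabCubes_cornerDisc_le {r : ℕ} (hr : r < m) (t : ℝ) :
    ∫ P, ∑ x ∈ slabCubes m d r, cornerDisc r t x P ∂jitterMeasure m d ≤ expStarDisc m d := by
  have hint : ∀ x, Integrable (cornerDisc r t x) (jitterMeasure m d) := integrable_cornerDisc r t
  calc ∫ P, ∑ x ∈ slabCubes m d r, cornerDisc r t x P ∂jitterMeasure m d
      = ∫ P, ∑ x, cornerDisc r t x P ∂jitterMeasure m d := by
        rw [integral_finsetSum _ fun x _ => hint x, integral_finsetSum _ fun x _ => hint x]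
        exact Finset.sum_subset (Finset.subset_univ _) fun x _ hx =>
          integral_cornerDisc_of_notMem t hx
    _ ≤ expStarDisc m d :=
        integral_mono (integrable_finsetSum _ fun x _ => hint x) integrable_starDisc
          (sum_cornerDisc_le_starDisc hr t)

theorem sum_slab_cornerDisc {r s : ℕ} {t : ℝ} {i : Fin d}
    {P : (Fin d → Fin m) → Fin d → ℝ} (hP : ∀ x, P x ∈ jitterCube m d x) :
    ∑ x ∈ slab m r i s, cornerDisc r t x P =
      if cornerIndex r t P i = 2 * s + 1 then slabDisc r i s P else 0 := by
  have hcube : ∀ x ∈ slab m r i s, cornerDisc r t x P =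
      if cornerIndex r t P i = 2 * s + 1 then cubeDisc x (lowerHalf x i) (P x) else 0 := by
    intro x hx
    rw [mem_slab] at hx
    rw [cornerDisc, cubeDisc_halfGridBox (i := i) (fun l hl => ?_) (hP x), hx.1]
    have := hx.2 l hl
    have := two_mul_le_cornerIndex r t P l
    lia
  rw [Finset.sum_congr rfl hcube]
  split_ifs <;> simp [slabDisc]

theorem indicator_hitEvent_le {r : ℕ} (hr : r < m) {t : ℝ} (i : Fin d)
    {P : (Fin d → Fin m) → Fin d → ℝ} (hP : ∀ x, P x ∈ jitterCube m d x) :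
    (hitEvent m r t i).indicator (fun _ => t) P ≤
      ∑ s ∈ Finset.Ico r m, ∑ x ∈ slab m r i s, cornerDisc r t x P := by
  classical
  simp only [sum_slab_cornerDisc hP]
  rcases cornerIndex_eq_or_exists hr t P i with ⟨hH, hlt⟩ | ⟨s, hs, hH, hts⟩
  · have hnot : P ∉ hitEvent m r t i := by simpa [hitEvent] using hlt
    rw [Set.indicator_of_notMem hnot, Finset.sum_eq_zero fun s _ => if_neg (by lia)]
  · have hmem : P ∈ hitEvent m r t i := Set.mem_biUnion hs hts
    simpa [Set.indicator_of_mem hmem, hH, Finset.mem_Ico.1 hs] using hts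

theorem measureReal_hitEvent {r : ℕ} (hr : r ≤ m) (t : ℝ) (i : Fin d) :
    (jitterMeasure m d).real (hitEvent m r t i) =
      1 - (1 - fairBinomialTail (r ^ (d - 1)) t) ^ (m - r) := by
  have hmeas : ∀ s, MeasurableSet {P : (Fin d → Fin m) → Fin d → ℝ | t ≤ slabDisc r i s P} :=
    fun s => measurableSet_le measurable_const (measurable_slabDisc r i s)
  have hdisj : (Finset.Ico r m : Set ℕ).PairwiseDisjoint (slab m r i) := fun s hs s' _ hss' =>
    disjoint_slab (Finset.mem_Ico.1 hs).1 (by simpa using hss')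
  have hdep : ∀ s, DependsOn
      (· ∈ ({P | t ≤ slabDisc r i s P}ᶜ : Set ((Fin d → Fin m) → Fin d → ℝ)))
      (slab m r i s : Set (Fin d → Fin m)) := fun s P Q hPQ => by
    simp only [Set.mem_compl_iff, Set.mem_ofPred_eq, dependsOn_slabDisc r i s hPQ]
  have hmiss : (jitterMeasure m d).real (⋂ s ∈ Finset.Ico r m, {P | t ≤ slabDisc r i s P}ᶜ) =
      (1 - fairBinomialTail (r ^ (d - 1)) t) ^ (m - r) := by
    rw [jitterMeasure_eq_pi, measureReal_pi_biInter_of_dependsOn hdisj (fun s => (hmeas s).compl)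
      hdep, ← Nat.card_Ico r m]
    refine Finset.prod_eq_pow_card fun s hs => ?_
    rw [probReal_compl_eq_one_sub (hmeas s), ← jitterMeasure_eq_pi,
      measureReal_le_slabDisc hr i (Finset.mem_Ico.1 hs).2]
  rw [← hmiss, ← Set.compl_iUnion₂, ← hitEvent,
    probReal_compl_eq_one_sub (measurableSet_hitEvent r t i), sub_sub_cancel]

theorem mul_one_sub_pow_le_expStarDisc {r : ℕ} (hr : r < m) (t : ℝ) :
    d * t * (1 - (1 - fairBinomialTail (r ^ (d - 1)) t) ^ (m - r)) ≤ expStarDisc m d := by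
  have hint : ∀ i : Fin d, Integrable ((hitEvent m r t i).indicator fun _ => t)
      (jitterMeasure m d) := fun i => (integrable_const t).indicator (measurableSet_hitEvent r t i)
  calc d * t * (1 - (1 - fairBinomialTail (r ^ (d - 1)) t) ^ (m - r))
      = ∫ P, ∑ i : Fin d, (hitEvent m r t i).indicator (fun _ => t) P ∂jitterMeasure m d := by
        rw [integral_finsetSum _ fun i _ => hint i]
        simp only [integral_indicator_const _ (measurableSet_hitEvent r t _),
          measureReal_hitEvent hr.le]
        simp
        ring
    _ ≤ ∫ P, ∑ x ∈ slabCubes m d r, cornerDisc r t x P ∂jitterMeasure m d := by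
        refine integral_mono_ae (integrable_finsetSum _ fun i _ => hint i)
          (integrable_finsetSum _ fun x _ => integrable_cornerDisc r t x) ?_
        filter_upwards [ae_forall_mem_jitterCube] with P hP
        rw [sum_slabCubes]
        exact Finset.sum_le_sum fun i _ => indicator_hitEvent_le hr i hP
    _ ≤ expStarDisc m d := integral_sum_slabCubes_cornerDisc_le hr t

end RandomCorner

section ExplicitBound

theorem pow_div_exp_one_le_sub_pow {a b : ℝ} {n : ℕ} (ha : 0 ≤ a) (hab : b * (n + 1) ≤ a) :
    a ^ n / exp 1 ≤ (a - b) ^ n := by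
  obtain rfl | hn := Nat.eq_zero_or_pos n
  · simpa using inv_le_one_of_one_le₀ (one_le_exp zero_le_one)
  have hn' : (0 : ℝ) < n := mod_cast hn
  have hsub : a * n ≤ (a - b) * (n + 1) := by linarith
  have hexp : (1 + 1 / (n : ℝ)) ^ n ≤ exp 1 :=
    calc (1 + 1 / (n : ℝ)) ^ n ≤ exp (1 / n) ^ n := by
          gcongr
          linarith [add_one_le_exp (1 / (n : ℝ))]
      _ = exp 1 := by rw [← exp_nat_mul, mul_one_div_cancel hn'.ne']
  have hb : 0 ≤ a - b :=
    nonneg_of_mul_nonneg_left ((mul_nonneg ha hn'.le).trans hsub) (by positivity)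
  rw [div_le_iff₀ (exp_pos 1)]
  calc a ^ n ≤ ((a - b) * (1 + 1 / n)) ^ n := by
        gcongr
        rwa [← mul_le_mul_iff_left₀ hn', mul_assoc, add_mul, one_div_mul_cancel hn'.ne', one_mul]
    _ = (a - b) ^ n * (1 + 1 / n) ^ n := mul_pow ..
    _ ≤ (a - b) ^ n * exp 1 := by gcongr

theorem one_sub_exp_neg_mul_le_one_sub_one_sub_pow {p q : ℝ} (hqp : q ≤ p) (hp : p ≤ 1) (k : ℕ) :
    1 - exp (-(k * q)) ≤ 1 - (1 - p) ^ k := by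
  rw [← mul_neg, exp_nat_mul]
  gcongr
  linarith [add_one_le_exp (-q)]

theorem rpow_mul_rpow_mul_sqrt_le_sqrt {m d k : ℕ} (hd : 1 ≤ d) (hkd : k * d ≤ m) (x : ℝ) :
    (2 * exp 1) ^ (-(1 : ℝ) / 2) * (m : ℝ) ^ (((d : ℝ) - 1) / 2) * √x ≤
      √(((m - k) ^ (d - 1) : ℕ) * x / 2) := by
  obtain hx | hx := le_total x 0
  · simp [sqrt_eq_zero_of_nonpos hx]
  have hkm : k ≤ m := (Nat.le_mul_of_pos_right k hd).trans hkd
  have hkd' : (k : ℝ) * ((d - 1 : ℕ) + 1) ≤ m := by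
    rw [← Nat.cast_add_one, Nat.sub_add_cancel hd]
    exact_mod_cast hkd
  have hconst : (2 * exp 1) ^ (-(1 : ℝ) / 2) = √(2 * exp 1)⁻¹ := by
    rw [sqrt_eq_rpow, inv_rpow (by positivity), neg_div, rpow_neg (by positivity)]
  have hpow : (m : ℝ) ^ (((d : ℝ) - 1) / 2) = √(m ^ (d - 1)) := by
    rw [sqrt_eq_rpow, ← rpow_natCast, ← rpow_mul (Nat.cast_nonneg m), Nat.cast_pred hd,
      mul_one_div]
  rw [hconst, hpow, ← sqrt_mul (by positivity), ← sqrt_mul (by positivity)]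
  refine sqrt_le_sqrt ?_
  calc (2 * exp 1)⁻¹ * (m : ℝ) ^ (d - 1) * x = m ^ (d - 1) / exp 1 * x / 2 := by field_simp
    _ ≤ (m - k : ℝ) ^ (d - 1) * x / 2 := by
        gcongr
        exact pow_div_exp_one_le_sub_pow (Nat.cast_nonneg m) hkd'
    _ = ((m - k) ^ (d - 1) : ℕ) * x / 2 := by rw [Nat.cast_pow, Nat.cast_sub hkm]

end ExplicitBound

theorem jittered_sampling_lower_bound_explicit_general {m d k : ℕ} (hd : 2 ≤ d) (hkd : k * d ≤ m)
    (hk : exp 6 ≤ k) :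
    (2 * exp 1) ^ (-(1 : ℝ) / 2) * d * (m : ℝ) ^ (((d : ℝ) - 1) / 2) * √(log k - log (log k)) *
        (1 - exp (-√(log k) / (1.5 * exp (169 / 6) * √π))) ≤ expStarDisc m d := by
  have hk0 : (0 : ℝ) < k := (exp_pos 6).trans_le hk
  have hkpos : 0 < k := mod_cast hk0
  have h2k : k * 2 ≤ m := (Nat.mul_le_mul_left k hd).trans hkd
  have : NeZero m := ⟨by lia⟩
  let n := (m - k) ^ (d - 1)
  have hn : exp (log k) ≤ n := by
    rw [exp_log hk0]
    exact_mod_cast (show k ≤ m - k by lia).trans (Nat.le_self_pow (by lia) _)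
  have htail := sqrt_mul_exp_neg_div_le_fairBinomialTail ((le_log_iff_exp_le hk0).2 hk) hn
  have hrate : √(log k) / (1.5 * exp (169 / 6) * √π) =
      k * (√(log k) * exp (-log k) / (1.5 * exp (169 / 6) * √π)) := by
    rw [exp_neg, exp_log hk0]
    field_simp
  let t := √(n * (log k - log (log k)) / 2)
  calc (2 * exp 1) ^ (-(1 : ℝ) / 2) * d * (m : ℝ) ^ (((d : ℝ) - 1) / 2) *
        √(log k - log (log k)) * (1 - exp (-√(log k) / (1.5 * exp (169 / 6) * √π)))
      = d * ((2 * exp 1) ^ (-(1 : ℝ) / 2) * (m : ℝ) ^ (((d : ℝ) - 1) / 2) *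
          √(log k - log (log k))) * (1 - exp (-√(log k) / (1.5 * exp (169 / 6) * √π))) := by ring
    _ ≤ d * t * (1 - exp (-√(log k) / (1.5 * exp (169 / 6) * √π))) := by
        gcongr
        · simp only [sub_nonneg, exp_le_one_iff, neg_div, neg_nonpos]
          positivity
        · exact rpow_mul_rpow_mul_sqrt_le_sqrt (by lia) hkd _
    _ ≤ d * t * (1 - (1 - fairBinomialTail n t) ^ k) := by
        rw [neg_div, hrate]
        exact mul_le_mul_of_nonneg_left (one_sub_exp_neg_mul_le_one_sub_one_sub_pow htail
          (fairBinomialTail_le_one n t) k) (by positivity)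
    _ ≤ expStarDisc m d := by
        have hslabs := mul_one_sub_pow_le_expStarDisc (d := d) (show m - k < m by lia) t
        rwa [Nat.sub_sub_self (by lia)] at hslabs

/-- Main lower bound (Lemma 2): for `m, d ≥ 2` with `⌊m/d⌋ ≥ e^6` and `N = m^d`, a jittered
sampling point set `P` of `N` points satisfies the explicit lower bound
`E[D*(P)] ≥ (2e)^(−1/2)·d·m^((d−1)/2)·√(ln⌊m/d⌋ − ln ln⌊m/d⌋)
  ·(1 + √(2 ln⌊m/d⌋/(m−⌊m/d⌋)^(d−1)))^(−1/2)·(1 − exp(−√(ln⌊m/d⌋)/(1.5·e^(169/6)·√π)))`. -/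
theorem jittered_sampling_lower_bound_explicit (m d : ℕ) (hm : 2 ≤ m) (hd : 2 ≤ d)
    (hk : Real.exp 6 ≤ ((m / d : ℕ) : ℝ)) :
    (2 * Real.exp 1) ^ (-(1 : ℝ) / 2) * d * (m : ℝ) ^ (((d : ℝ) - 1) / 2) *
        Real.sqrt (Real.log ((m / d : ℕ) : ℝ) - Real.log (Real.log ((m / d : ℕ) : ℝ))) *
        (1 + Real.sqrt (2 * Real.log ((m / d : ℕ) : ℝ) / ((m : ℝ) - ((m / d : ℕ) : ℝ)) ^ (d - 1)))
          ^ (-(1 : ℝ) / 2) *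
        (1 - Real.exp (- Real.sqrt (Real.log ((m / d : ℕ) : ℝ)) /
            (1.5 * Real.exp (169 / 6) * Real.sqrt Real.pi)))
      ≤ expStarDisc m d := by
  have hfactor : (1 + √(2 * log (m / d : ℕ) / ((m : ℝ) - (m / d : ℕ)) ^ (d - 1)))
      ^ (-(1 : ℝ) / 2) ≤ 1 :=
    rpow_le_one_of_one_le_of_nonpos (le_add_of_nonneg_right (sqrt_nonneg _)) (by norm_num)
  have hexp : exp (-√(log (m / d : ℕ)) / (1.5 * exp (169 / 6) * √π)) ≤ 1 := by
    rw [exp_le_one_iff, neg_div, neg_nonpos]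
    positivity
  refine le_trans ?_
    (jittered_sampling_lower_bound_explicit_general hd (Nat.div_mul_le_self m d) hk)
  exact mul_le_mul_of_nonneg_right (mul_le_of_le_one_right (by positivity) hfactor)
    (sub_nonneg.2 hexp)
end
end
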